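/- arXiv:2309.02225 — 5 statements merged into one kernel-verified Lean document; each statement's English description precedes it below -/
import Mathlib

section
/- Fix integers d ≥ 2 and k ≥ 0, and a word w ∈ Σ^k. For each n ≥ d+1, let G_{d,n} be a digraph drawn uniformly at random from the (finite, nonempty) set of all d-regular digraphs on {1,…,n}, with random adjacency matrix A_{d,n}. Then (1/n)·E[Tr(A_{d,n}^w)] converges to M_d(w) as n → ∞. -/
/- Σ = {1,*} is encoded as `Bool`: `true` is the letter `1`, `false` is the letter `*`. -/

/-- The generator `g_i^{w}` in the free group `F_d`: `g_i` if the letter is `1` (`true`),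
and `g_i⁻¹` if the letter is `*` (`false`). -/
def gens (d : ℕ) (b : Bool) (i : Fin d) : FreeGroup (Fin d) :=
  if b then FreeGroup.of i else (FreeGroup.of i)⁻¹

/-- The product `g_{i_1}^{w_1} ⋯ g_{i_k}^{w_k}` in the free group `F_d`. -/
def wprod {d k : ℕ} (w : Fin k → Bool) (i : Fin k → Fin d) : FreeGroup (Fin d) :=
  (List.ofFn fun t => gens d (w t) (i t)).prod

/-- `Mword d w` is the number of `w`-paths: tuples `(i_1,…,i_k) ∈ [d]^k` with
`g_{i_1}^{w_1} ⋯ g_{i_k}^{w_k} = 1` in `F_d`. -/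
noncomputable def Mword (d : ℕ) {k : ℕ} (w : Fin k → Bool) : ℕ :=
  Nat.card {i : Fin k → Fin d // wprod w i = 1}

/-- `A^w := A^{w_1} ⋯ A^{w_k}` where `A^1 := A` and `A^* := Aᵀ`. -/
def wMat {V : Type*} [Fintype V] [DecidableEq V] (A : Matrix V V ℕ) {k : ℕ}
    (w : Fin k → Bool) : Matrix V V ℕ :=
  (List.ofFn fun t => if w t then A else A.transpose).prod

/-- A digraph on `Fin n`, given by `B i j = true` iff there is an arc `i → j`,
is `d`-regular: no loops, out-degrees and in-degrees all equal to `d`. -/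
def IsRegB (d n : ℕ) (B : Fin n → Fin n → Bool) : Prop :=
  (∀ i, B i i = false) ∧
  (∀ i, (Finset.univ.filter fun j => B i j = true).card = d) ∧
  (∀ j, (Finset.univ.filter fun i => B i j = true).card = d)

open Classical in
/-- The (finite) set of all `d`-regular digraphs on `{1,…,n}`. -/
noncomputable def regDigraphs (d n : ℕ) : Finset (Fin n → Fin n → Bool) :=
  Finset.univ.filter (IsRegB d n)

/-- Adjacency matrix (with `ℕ` entries) of a digraph. -/
def adjB {n : ℕ} (B : Fin n → Fin n → Bool) : Matrix (Fin n) (Fin n) ℕ :=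
  fun i j => if B i j then 1 else 0

/-!
By Birkhoff's theorem the adjacency matrix of a `d`-regular digraph is a sum of `d` permutation
matrices. Expanding the product turns `Tr(A^w)` into the sum over all `i` of the number of fixed
points of the permutation represented by `wprod w i`. If this word is trivial, every vertex is
fixed; otherwise a fixed vertex closes up a reduced walk of length at most `k`, so its ball of
radius `k` is not a tree. Exchanging the heads of an arc on a short cycle and of a distant arc
can be undone in boundedly many ways, whereas there are about `d n` distant arcs; hence the
expected number of vertices whose ball is not a tree is bounded uniformly in `n`.
-/

namespace StarMoments

open Finset

variable {V : Type*}

section PermutationDecomposition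

variable [Fintype V] [DecidableEq V]

lemma exists_perm_forall_pos_of_mem_doublyStochastic {R : Type*} [Field R] [LinearOrder R]
    [IsStrictOrderedRing R] {M : Matrix V V R} (hM : M ∈ doublyStochastic R V) :
    ∃ σ : Equiv.Perm V, ∀ x, 0 < M x (σ x) := by
  obtain ⟨weight, weight_nonneg, weight_sum, rfl⟩ :=
    exists_eq_sum_perm_of_mem_doublyStochastic hM
  obtain ⟨σ, -, hσ⟩ := exists_ne_zero_of_sum_ne_zero (weight_sum.trans_ne one_ne_zero)
  refine ⟨σ, fun x => ?_⟩
  have term_nonneg (τ : Equiv.Perm V) : 0 ≤ (weight τ • τ.permMatrix R) x (σ x) :=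
    mul_nonneg (weight_nonneg τ) (nonneg_of_mem_doublyStochastic permMatrix_mem_doublyStochastic)
  calc
    0 < weight σ := (weight_nonneg σ).lt_of_ne' hσ
    _ = (weight σ • σ.permMatrix R) x (σ x) := by simp [Equiv.toPEquiv_apply]
    _ ≤ ∑ τ, (weight τ • τ.permMatrix R) x (σ x) :=
      single_le_sum (fun τ _ => term_nonneg τ) (mem_univ σ)
    _ = _ := (Matrix.sum_apply ..).symm

omit [DecidableEq V] in
lemma exists_perm_forall_ne_zero {A : Matrix V V ℕ} {s : ℕ} (hs : s ≠ 0)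
    (hrow : ∀ x, ∑ y, A x y = s) (hcol : ∀ y, ∑ x, A x y = s) :
    ∃ σ : Equiv.Perm V, ∀ x, A x (σ x) ≠ 0 := by
  classical
  have hs' : (s : ℚ) ≠ 0 := Nat.cast_ne_zero.2 hs
  have hA : (s : ℚ)⁻¹ • A.map ((↑) : ℕ → ℚ) ∈ doublyStochastic ℚ V := by
    refine mem_doublyStochastic_iff_sum.2 ⟨fun x y => ?_, fun x => ?_, fun y => ?_⟩
    · exact mul_nonneg (inv_nonneg.2 s.cast_nonneg) (A x y).cast_nonneg
    · simp [← mul_sum, ← Nat.cast_sum, hrow, hs']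
    · simp [← mul_sum, ← Nat.cast_sum, hcol, hs']
  obtain ⟨σ, hσ⟩ := exists_perm_forall_pos_of_mem_doublyStochastic hA
  refine ⟨σ, fun x hx => (hσ x).ne' ?_⟩
  simp [hx]

lemma permMatrixHom_apply_apply {R : Type*} [NonAssocSemiring R] (σ : Equiv.Perm V) (x y : V) :
    Matrix.permMatrixHom (R := R) σ x y = if σ y = x then 1 else 0 := by
  simp [Equiv.toPEquiv_apply, Equiv.symm_apply_eq, @eq_comm _ x]

theorem exists_eq_sum_permMatrixHom (s : ℕ) (A : Matrix V V ℕ)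
    (hrow : ∀ x, ∑ y, A x y = s) (hcol : ∀ y, ∑ x, A x y = s) :
    ∃ σ : Fin s → Equiv.Perm V, A = ∑ i, Matrix.permMatrixHom (σ i) := by
  induction s generalizing A with
  | zero =>
    refine ⟨Fin.elim0, Matrix.ext fun x y => ?_⟩
    simpa using (sum_eq_zero_iff.1 (hrow x)) y (mem_univ y)
  | succ s ih =>
    obtain ⟨τ, hτ⟩ := exists_perm_forall_ne_zero s.succ_ne_zero hrow hcol
    obtain ⟨A', hA'⟩ : ∃ A', A = τ.permMatrix ℕ + A' := by
      refine ⟨fun x y => A x y - τ.permMatrix ℕ x y, Matrix.ext fun x y => ?_⟩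
      refine (Nat.add_sub_cancel' ?_).symm
      by_cases hxy : τ x = y
      · subst hxy
        simpa [Equiv.toPEquiv_apply, Nat.one_le_iff_ne_zero] using hτ x
      · simp [Equiv.toPEquiv_apply, hxy]
    have hrow' (x) : ∑ y, A' x y = s := by
      simpa [hA', sum_add_distrib, Equiv.toPEquiv_apply, add_comm 1] using hrow x
    have hcol' (y) : ∑ x, A' x y = s := by
      simpa [hA', sum_add_distrib, Equiv.toPEquiv_apply, ← Equiv.eq_symm_apply, add_comm 1]
        using hcol y
    obtain ⟨σ, hσ⟩ := ih A' hrow' hcol'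
    exact ⟨Fin.cons τ⁻¹ σ, by simp [Fin.sum_univ_succ, hA', hσ]⟩

end PermutationDecomposition

section TraceExpansion

lemma prod_ofFn_sum {R ι : Type*} [Semiring R] [Fintype ι] {k : ℕ} (f : Fin k → ι → R) :
    (List.ofFn fun t => ∑ i, f t i).prod =
      ∑ g : Fin k → ι, (List.ofFn fun t => f t (g t)).prod := by
  induction k with
  | zero => simp
  | succ k ih =>
    rw [List.ofFn_succ, List.prod_cons, ih fun t => f t.succ, Fintype.sum_mul_sum,
      ← Fintype.sum_prod_type']
    refine Fintype.sum_equiv (Fin.consEquiv fun _ => ι) _ _ fun g => ?_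
    simp [List.ofFn_succ, Fin.consEquiv]

lemma norm_wprod_le {d k : ℕ} (w : Fin k → Bool) (i : Fin k → Fin d) : (wprod w i).norm ≤ k := by
  induction k with
  | zero => simp [wprod]
  | succ k ih =>
    have norm_gens : (gens d (w 0) (i 0)).norm = 1 := by
      unfold gens
      split_ifs <;> simp
    calc
      (wprod w i).norm = (gens d (w 0) (i 0) * wprod (w ∘ Fin.succ) (i ∘ Fin.succ)).norm := by
        simp [wprod, List.ofFn_succ]
      _ ≤ (gens d (w 0) (i 0)).norm + (wprod (w ∘ Fin.succ) (i ∘ Fin.succ)).norm :=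
        FreeGroup.norm_mul_le _ _
      _ ≤ 1 + k := Nat.add_le_add norm_gens.le (ih _ _)
      _ = k + 1 := Nat.add_comm _ _

variable [Fintype V] [DecidableEq V] {d k : ℕ}

lemma trace_permMatrixHom {R : Type*} [NonAssocSemiring R] (σ : Equiv.Perm V) :
    Matrix.trace (Matrix.permMatrixHom (R := R) σ) = #{v | σ v = v} := by
  simp [Matrix.trace, permMatrixHom_apply_apply, -Matrix.permMatrixHom_apply]

lemma wMat_sum_permMatrixHom (σ : Fin d → Equiv.Perm V) (w : Fin k → Bool) :
    wMat (∑ i, Matrix.permMatrixHom (σ i)) w =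
      ∑ i : Fin k → Fin d, Matrix.permMatrixHom (FreeGroup.lift σ (wprod w i)) := by
  have letter (b : Bool) :
      (if b then ∑ i, Matrix.permMatrixHom (σ i)
        else (∑ i, Matrix.permMatrixHom (σ i)).transpose : Matrix V V ℕ) =
      ∑ i, Matrix.permMatrixHom (FreeGroup.lift σ (gens d b i)) := by
    cases b <;> simp [gens, Matrix.transpose_sum]
  simp only [wMat, letter, prod_ofFn_sum, wprod, map_list_prod, List.map_ofFn, Function.comp_def]

theorem trace_wMat_sum_permMatrixHom (σ : Fin d → Equiv.Perm V) (w : Fin k → Bool) :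
    Matrix.trace (wMat (∑ i, Matrix.permMatrixHom (σ i)) w) =
      ∑ i : Fin k → Fin d, #{v | FreeGroup.lift σ (wprod w i) v = v} := by
  simp [wMat_sum_permMatrixHom, Matrix.trace_sum, trace_permMatrixHom, -Matrix.permMatrixHom_apply]

end TraceExpansion

section Balls

variable [Fintype V] [DecidableEq V] {B B' : V → V → Bool} {v x y : V} {r : ℕ}

/-- The closed ball of radius `r` around `v` in the digraph `B`, for the distance that ignores the
orientation of the arcs. -/
def ball (B : V → V → Bool) (v : V) : ℕ → Finset V
  | 0 => {v}
  | r + 1 => ball B v r ∪ (ball B v r).biUnion fun x => {y | B x y ∨ B y x}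

lemma mem_ball_succ :
    y ∈ ball B v (r + 1) ↔ y ∈ ball B v r ∨ ∃ x ∈ ball B v r, B x y = true ∨ B y x = true := by
  simp [ball]

lemma mem_ball_succ_of_arc (hx : x ∈ ball B v r) (hxy : B x y = true ∨ B y x = true) :
    y ∈ ball B v (r + 1) :=
  mem_ball_succ.2 (Or.inr ⟨x, hx, hxy⟩)

lemma ball_mono (B : V → V → Bool) (v : V) : Monotone (ball B v) :=
  monotone_nat_of_le_succ fun _ _ hx => mem_ball_succ.2 (Or.inl hx)

lemma center_mem_ball (B : V → V → Bool) (v : V) (r : ℕ) : v ∈ ball B v r :=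
  ball_mono B v r.zero_le (mem_singleton_self v)

lemma ball_subset_ball_of_arcs
    (h : ∀ x ∈ ball B v r, ∀ y ∈ ball B v r, B x y = true → B' x y = true) :
    ball B v r ⊆ ball B' v r := by
  induction r with
  | zero => exact Subset.rfl
  | succ r ih =>
    have hmono := ball_mono B v r.le_succ
    have hsub := ih fun x hx y hy => h x (hmono hx) y (hmono hy)
    intro y hy
    obtain hy' | ⟨x, hx, hxy⟩ := mem_ball_succ.1 hy
    · exact ball_mono B' v r.le_succ (hsub hy')
    · exact mem_ball_succ_of_arc (hsub hx) (hxy.imp (h x (hmono hx) y hy) (h y hy x (hmono hx)))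

lemma card_ball_le {d : ℕ} (hout : ∀ x, #{y | B x y} ≤ d) (hin : ∀ y, #{x | B x y} ≤ d)
    (v : V) (r : ℕ) : #(ball B v r) ≤ (2 * d + 1) ^ r := by
  induction r with
  | zero => simp [ball]
  | succ r ih =>
    have card_nbrs (x : V) : #{y | B x y ∨ B y x} ≤ 2 * d := by
      rw [filter_or]
      exact (card_union_le _ _).trans (by linarith [hout x, hin x])
    calc
      #(ball B v (r + 1)) ≤ #(ball B v r) + #(ball B v r) * (2 * d) :=
        (card_union_le _ _).trans
          (Nat.add_le_add_left (card_biUnion_le_card_mul _ _ _ fun x _ => card_nbrs x) _)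
      _ = (2 * d + 1) * #(ball B v r) := by ring
      _ ≤ (2 * d + 1) * (2 * d + 1) ^ r := Nat.mul_le_mul_left _ ih
      _ = (2 * d + 1) ^ (r + 1) := (pow_succ' _ _).symm

end Balls

section CycleArcs

variable [DecidableEq V] {B : V → V → Bool} {a b : V × V} {v x y z : V} {r : ℕ}

/-- The digraph obtained from `B` by deleting the arc `a`. -/
def deleteArc (B : V → V → Bool) (a : V × V) : V → V → Bool :=
  fun x y => B x y && decide ((x, y) ≠ a)

lemma deleteArc_eq_true : deleteArc B a x y = true ↔ B x y = true ∧ (x, y) ≠ a := by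
  simp [deleteArc]

variable [Fintype V]

lemma ball_deleteArc_subset (B : V → V → Bool) (a : V × V) (v : V) (r : ℕ) :
    ball (deleteArc B a) v r ⊆ ball B v r :=
  ball_subset_ball_of_arcs fun _ _ _ _ h => (deleteArc_eq_true.1 h).1

lemma ball_deleteArc_subset_ball_deleteArc (hb : z = b.1 ∨ z = b.2)
    (hz : z ∉ ball (deleteArc B a) v r) :
    ball (deleteArc B a) v r ⊆ ball (deleteArc B b) v r := by
  refine ball_subset_ball_of_arcs fun x hx y hy hxy => ?_
  refine deleteArc_eq_true.2 ⟨(deleteArc_eq_true.1 hxy).1, ?_⟩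
  rintro rfl
  rcases hb with rfl | rfl
  · exact hz hx
  · exact hz hy

/-- The arcs lying on a short undirected cycle near `v`: both endpoints are still within distance
`r` of `v` after the arc is deleted. If there are none, the ball of radius `r` around `v` is a
tree. -/
def cycleArcs (B : V → V → Bool) (r : ℕ) (v : V) : Finset (V × V) :=
  {a | B a.1 a.2 ∧ a.1 ∈ ball (deleteArc B a) v r ∧ a.2 ∈ ball (deleteArc B a) v r}

lemma mem_cycleArcs :
    a ∈ cycleArcs B r v ↔
      B a.1 a.2 = true ∧ a.1 ∈ ball (deleteArc B a) v r ∧ a.2 ∈ ball (deleteArc B a) v r := by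
  simp [cycleArcs]

end CycleArcs

section ReducedWalks

variable {ι : Type*} {σ : ι → Equiv.Perm V} {B : V → V → Bool}

/-- The permutations `σ i` are arc-disjoint 1-factors of the digraph `B`, where `σ i` stands for
the set of arcs `σ i x → x`. -/
structure IsDisjointFactors (B : V → V → Bool) (σ : ι → Equiv.Perm V) : Prop where
  arc : ∀ i x, B (σ i x) x = true
  injective : ∀ x, Function.Injective fun i => σ i x

/-- The permutation by which a letter of a free group word acts under `FreeGroup.lift σ`. -/
def letterPerm (σ : ι → Equiv.Perm V) (l : ι × Bool) : Equiv.Perm V :=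
  cond l.2 (σ l.1) (σ l.1)⁻¹

/-- The arc along which the letter `l` moves the vertex `x`. -/
def letterArc (σ : ι → Equiv.Perm V) (x : V) (l : ι × Bool) : V × V :=
  cond l.2 (letterPerm σ l x, x) (x, letterPerm σ l x)

/-- The endpoint of the walk that starts at `v` and follows the letters of `L` from right to
left. -/
def walkEnd (σ : ι → Equiv.Perm V) (v : V) (L : List (ι × Bool)) : V :=
  (L.map (letterPerm σ)).prod v

lemma walkEnd_cons (σ : ι → Equiv.Perm V) (v : V) (l : ι × Bool) (L : List (ι × Bool)) :
    walkEnd σ v (l :: L) = letterPerm σ l (walkEnd σ v L) := by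
  simp [walkEnd]

lemma lift_apply_eq_walkEnd [DecidableEq ι] (σ : ι → Equiv.Perm V) (g : FreeGroup ι) (v : V) :
    FreeGroup.lift σ g v = walkEnd σ v g.toWord := by
  conv_lhs => rw [← FreeGroup.mk_toWord (x := g), FreeGroup.lift_mk]
  rfl

lemma letterArc_eq (σ : ι → Equiv.Perm V) (x : V) (l : ι × Bool) :
    letterArc σ x l = (letterPerm σ l x, x) ∨ letterArc σ x l = (x, letterPerm σ l x) := by
  obtain ⟨i, _ | _⟩ := l <;> simp [letterArc]

lemma IsDisjointFactors.arc_letterArc (hσ : IsDisjointFactors B σ) (x : V) (l : ι × Bool) :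
    B (letterArc σ x l).1 (letterArc σ x l).2 = true := by
  obtain ⟨i, _ | _⟩ := l
  · simpa [letterArc, letterPerm] using hσ.arc i ((σ i)⁻¹ x)
  · exact hσ.arc i x

lemma IsDisjointFactors.letterArc_ne_letterArc (hσ : IsDisjointFactors B σ) {x : V}
    {l l' : ι × Bool} (hx : letterPerm σ l x ≠ x) (hred : l'.1 = l.1 → l'.2 = l.2) :
    letterArc σ x l ≠ letterArc σ (letterPerm σ l x) l' := by
  obtain ⟨i, b⟩ := l
  obtain ⟨j, c⟩ := l'
  cases b <;> cases c <;>
    simp only [letterArc, letterPerm, cond_true, cond_false, ne_eq, Prod.mk.injEq,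
      not_and] at hx hred ⊢
  · exact fun h => absurd h.symm hx
  · intro h
    have : σ i ((σ i)⁻¹ x) = σ j ((σ i)⁻¹ x) := by simpa using h
    simpa using hred (hσ.injective _ this).symm
  · intro _ h
    have : σ i x = σ j x := (Equiv.Perm.inv_eq_iff_eq.1 h.symm)
    simpa using hred (hσ.injective _ this).symm
  · exact fun _ h => absurd h.symm hx

variable [Fintype V] [DecidableEq V] {v : V} {r : ℕ}

lemma IsDisjointFactors.letterPerm_notMem_ball (hσ : IsDisjointFactors B σ)
    (hv : cycleArcs B r v = ∅) {x : V} {l : ι × Bool}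
    (hx : x ∈ ball (deleteArc B (letterArc σ x l)) v r) :
    letterPerm σ l x ∉ ball (deleteArc B (letterArc σ x l)) v r := by
  intro hlx
  refine notMem_empty (letterArc σ x l) (hv ▸ mem_cycleArcs.2 ⟨hσ.arc_letterArc x l, ?_⟩)
  rcases letterArc_eq σ x l with h | h <;> rw [h] at hx hlx ⊢
  exacts [⟨hlx, hx⟩, ⟨hx, hlx⟩]

/-- In a tree-like ball a reduced walk never comes back to an arc it has used: deleting the arc it
is about to use does not disconnect it from its starting point. -/
lemma IsDisjointFactors.walkEnd_mem_ball (hσ : IsDisjointFactors B σ)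
    (hv : cycleArcs B r v = ∅) {L : List (ι × Bool)} :
    ∀ {l : ι × Bool}, FreeGroup.IsReduced (l :: L) → L.length ≤ r →
      walkEnd σ v L ∈ ball (deleteArc B (letterArc σ (walkEnd σ v L) l)) v L.length := by
  induction L with
  | nil => exact fun _ _ => center_mem_ball _ v _
  | cons l' L ih =>
    intro l hred hlen
    rw [FreeGroup.isReduced_cons_cons] at hred
    rw [List.length_cons] at hlen ⊢
    set x := walkEnd σ v L
    set a := letterArc σ x l'
    rw [walkEnd_cons]
    set x' := letterPerm σ l' x
    set b := letterArc σ x' l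
    have hx : x ∈ ball (deleteArc B a) v L.length := ih hred.2 (by omega)
    have hx' : x' ∉ ball (deleteArc B a) v L.length := fun h =>
      hσ.letterPerm_notMem_ball hv (ball_mono _ v (by omega) hx) (ball_mono _ v (by omega) h)
    have hab : a ≠ b := hσ.letterArc_ne_letterArc (ne_of_mem_of_not_mem hx hx').symm hred.1
    have hb : x' = b.1 ∨ x' = b.2 := by
      rcases letterArc_eq σ x' l with h | h
      exacts [Or.inr (congrArg Prod.snd h).symm, Or.inl (congrArg Prod.fst h).symm]
    refine mem_ball_succ_of_arc (ball_deleteArc_subset_ball_deleteArc hb hx' hx) ?_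
    have ha : deleteArc B b a.1 a.2 = true := deleteArc_eq_true.2 ⟨hσ.arc_letterArc x l', hab⟩
    rcases letterArc_eq σ x l' with h | h
    · exact Or.inr (by simpa [a, h] using ha)
    · exact Or.inl (by simpa [a, h] using ha)

theorem IsDisjointFactors.lift_apply_ne [DecidableEq ι] (hσ : IsDisjointFactors B σ)
    (hv : cycleArcs B r v = ∅) {g : FreeGroup ι} (hg : g ≠ 1) (hgr : g.norm ≤ r) :
    FreeGroup.lift σ g v ≠ v := by
  have hred : FreeGroup.IsReduced g.toWord := FreeGroup.isReduced_toWord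
  rw [lift_apply_eq_walkEnd]
  unfold FreeGroup.norm at hgr
  cases hL : g.toWord with
  | nil => exact absurd (FreeGroup.toWord_eq_nil_iff.1 hL) hg
  | cons l L =>
    rw [hL] at hred hgr
    rw [List.length_cons] at hgr
    have hlen : L.length ≤ r := Nat.le_of_succ_le hgr
    have hmem := ball_mono _ v hlen (hσ.walkEnd_mem_ball hv hred hlen)
    have hnotMem := hσ.letterPerm_notMem_ball hv hmem
    rw [walkEnd_cons]
    exact (ne_of_mem_of_not_mem (center_mem_ball _ v r) hnotMem).symm

end ReducedWalks

section Switching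

variable [DecidableEq V] {B : V → V → Bool} {a b : V × V} {d r : ℕ} {v x y : V}

/-- Simple switching: the arcs `a` and `b` exchange their heads. In the rows of their tails, the
columns of their heads are interchanged, which makes the operation an involution on all
digraphs. -/
def switch (B : V → V → Bool) (a b : V × V) : V → V → Bool :=
  fun x y => if x = a.1 ∨ x = b.1 then B x (Equiv.swap a.2 b.2 y) else B x y

/-- The condition under which `switch B a b` removes two arcs and creates two new arcs, neither of
which is a loop. -/
structure IsSwitchable (B : V → V → Bool) (a b : V × V) : Prop where
  left : B a.1 a.2 = true
  right : B b.1 b.2 = true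
  left_right : B a.1 b.2 = false
  right_left : B b.1 a.2 = false
  left_ne_right : a.1 ≠ b.2
  right_ne_left : b.1 ≠ a.2

lemma switch_switch (B : V → V → Bool) (a b : V × V) : switch (switch B a b) a b = B := by
  funext x y
  by_cases h : x = a.1 ∨ x = b.1 <;> simp [switch, h]

lemma IsSwitchable.switch_apply (h : IsSwitchable B a b) (x y : V) :
    switch B a b x y = if y = a.2 ∨ y = b.2 then B (Equiv.swap a.1 b.1 x) y else B x y := by
  obtain ⟨h₁, h₂, h₃, h₄, -, -⟩ := h
  simp only [switch, Equiv.swap_apply_def]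
  grind

lemma switch_apply_of_ne (hx : x ≠ b.1) (hy : y ≠ b.2) (hxy : (x, y) ≠ a) :
    switch B a b x y = B x y := by
  unfold switch
  simp only [Equiv.swap_apply_def]
  grind

/-- A loopless digraph in which all out-degrees and in-degrees are equal to `d`. -/
structure IsRegular [Fintype V] (d : ℕ) (B : V → V → Bool) : Prop where
  loopless : ∀ x, B x x = false
  card_out : ∀ x, #{y | B x y} = d
  card_in : ∀ y, #{x | B x y} = d

variable [Fintype V]

lemma IsRegular.switch (hB : IsRegular d B) (h : IsSwitchable B a b) :
    IsRegular d (switch B a b) where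
  loopless x := by
    have loopless := hB.loopless
    obtain ⟨h₁, h₂, -, -, h₅, h₆⟩ := h
    simp only [StarMoments.switch, Equiv.swap_apply_def]
    grind
  card_out x := by
    rw [← hB.card_out x]
    by_cases hx : x = a.1 ∨ x = b.1
    · exact card_equiv (Equiv.swap a.2 b.2) fun y => by simp [StarMoments.switch, hx]
    · simp [StarMoments.switch, hx]
  card_in y := by
    rw [← hB.card_in y]
    simp only [h.switch_apply]
    by_cases hy : y = a.2 ∨ y = b.2
    · exact card_equiv (Equiv.swap a.1 b.1) fun x => by simp [hy]
    · simp [hy]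

omit [DecidableEq V] in
lemma IsRegular.degree_pos (hB : IsRegular d B) (hxy : B x y = true) : 0 < d :=
  hB.card_out x ▸ card_pos.2 ⟨y, by simpa using hxy⟩

lemma IsRegular.card_ball_le (hB : IsRegular d B) (v : V) (r : ℕ) :
    #(ball B v r) ≤ (2 * d + 1) ^ r :=
  StarMoments.card_ball_le (fun x => (hB.card_out x).le) (fun y => (hB.card_in y).le) v r

lemma IsRegular.card_arcs_tail_mem (hB : IsRegular d B) (S : Finset V) :
    #{a : V × V | B a.1 a.2 ∧ a.1 ∈ S} = #S * d := by
  calc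
    #{a : V × V | B a.1 a.2 ∧ a.1 ∈ S} = #(S.sigma fun x => {y | B x y}) :=
      card_equiv (Equiv.sigmaEquivProd V V).symm fun a => by simp [and_comm]
    _ = #S * d := by simp [card_sigma, hB.card_out]

lemma IsRegular.card_arcs_head_mem (hB : IsRegular d B) (S : Finset V) :
    #{a : V × V | B a.1 a.2 ∧ a.2 ∈ S} = #S * d := by
  calc
    #{a : V × V | B a.1 a.2 ∧ a.2 ∈ S} = #(S.sigma fun y => {x | B x y}) :=
      card_equiv ((Equiv.prodComm V V).trans (Equiv.sigmaEquivProd V V).symm) fun a => by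
        simp [and_comm]
    _ = #S * d := by simp [card_sigma, hB.card_in]

/-- The arcs of `B` both of whose endpoints are at distance more than `r` from `v`. -/
def farArcs (B : V → V → Bool) (r : ℕ) (v : V) : Finset (V × V) :=
  {b | B b.1 b.2 ∧ b.1 ∉ ball B v r ∧ b.2 ∉ ball B v r}

lemma mem_farArcs :
    b ∈ farArcs B r v ↔ B b.1 b.2 = true ∧ b.1 ∉ ball B v r ∧ b.2 ∉ ball B v r := by
  simp [farArcs]

lemma IsRegular.le_card_farArcs (hB : IsRegular d B) (r : ℕ) (v : V) :
    d * (Fintype.card V - 2 * (2 * d + 1) ^ r) ≤ #(farArcs B r v) := by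
  have arcs_subset : ({a | B a.1 a.2 ∧ a.1 ∈ univ} : Finset (V × V)) ⊆
      farArcs B r v ∪
        (({a | B a.1 a.2 ∧ a.1 ∈ ball B v r} : Finset (V × V)) ∪
          ({a | B a.1 a.2 ∧ a.2 ∈ ball B v r} : Finset (V × V))) := by
    intro a
    simp only [mem_filter, mem_univ, true_and, and_true, mem_union, mem_farArcs]
    tauto
  have card_arcs_le : Fintype.card V * d ≤ #(farArcs B r v) + 2 * (#(ball B v r) * d) := by
    calc
      Fintype.card V * d = #{a : V × V | B a.1 a.2 ∧ a.1 ∈ univ} :=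
        (hB.card_arcs_tail_mem univ).symm
      _ ≤ _ := (card_le_card arcs_subset).trans
        ((card_union_le _ _).trans (Nat.add_le_add_left (card_union_le _ _) _))
      _ = _ := by rw [hB.card_arcs_tail_mem, hB.card_arcs_head_mem, ← two_mul]
  have := Nat.mul_le_mul_right d (hB.card_ball_le v r)
  rw [Nat.mul_sub]
  apply Nat.sub_le_of_le_add
  linarith

lemma isSwitchable_of_mem (ha : a ∈ cycleArcs B r v) (hb : b ∈ farArcs B (r + 1) v) :
    IsSwitchable B a b := by
  obtain ⟨ha, ha₁, ha₂⟩ := mem_cycleArcs.1 ha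
  obtain ⟨hb, hb₁, hb₂⟩ := mem_farArcs.1 hb
  replace ha₁ := ball_deleteArc_subset B a v r ha₁
  replace ha₂ := ball_deleteArc_subset B a v r ha₂
  have hmono := ball_mono B v r.le_succ
  exact ⟨ha, hb,
    Bool.eq_false_iff.2 fun h => hb₂ (mem_ball_succ_of_arc ha₁ (Or.inl h)),
    Bool.eq_false_iff.2 fun h => hb₁ (mem_ball_succ_of_arc ha₂ (Or.inr h)),
    ne_of_mem_of_not_mem (hmono ha₁) hb₂, (ne_of_mem_of_not_mem (hmono ha₂) hb₁).symm⟩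

lemma ball_deleteArc_subset_ball_switch (hb : b ∈ farArcs B r v) :
    ball (deleteArc B a) v r ⊆ ball (switch B a b) v r := by
  obtain ⟨-, hb₁, hb₂⟩ := mem_farArcs.1 hb
  refine ball_subset_ball_of_arcs fun x hx y hy hxy => ?_
  obtain ⟨hxy, hne⟩ := deleteArc_eq_true.1 hxy
  rwa [switch_apply_of_ne (ne_of_mem_of_not_mem (ball_deleteArc_subset B a v r hx) hb₁)
    (ne_of_mem_of_not_mem (ball_deleteArc_subset B a v r hy) hb₂) hne]

lemma farArcs_anti (B : V → V → Bool) (v : V) : Antitone fun r => farArcs B r v :=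
  fun _ _ hrs _ hb =>
    have ⟨hb, hb₁, hb₂⟩ := mem_farArcs.1 hb
    mem_farArcs.2 ⟨hb, fun h => hb₁ (ball_mono B v hrs h), fun h => hb₂ (ball_mono B v hrs h)⟩

/-- The pairs of arcs `(a, b)` that may have been switched near `v` to produce `B`: the arc `a` had
its endpoints within distance `r` of `v`, and the arcs of `B` are `a.1 → b.2` and `b.1 → a.2`. -/
def switchedPairs (B : V → V → Bool) (r : ℕ) (v : V) : Finset ((V × V) × V × V) :=
  {p | (p.1.1 ∈ ball B v r ∧ B p.1.1 p.2.2) ∧ (p.1.2 ∈ ball B v r ∧ B p.2.1 p.1.2)}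

lemma IsRegular.card_switchedPairs (hB : IsRegular d B) (r : ℕ) (v : V) :
    #(switchedPairs B r v) = (#(ball B v r) * d) ^ 2 := by
  calc
    #(switchedPairs B r v) =
        #(({a | B a.1 a.2 ∧ a.1 ∈ ball B v r} : Finset (V × V)) ×ˢ
          ({a | B a.1 a.2 ∧ a.2 ∈ ball B v r} : Finset (V × V))) := by
      refine card_nbij' (fun p => ((p.1.1, p.2.2), (p.2.1, p.1.2)))
        (fun p => ((p.1.1, p.2.2), (p.2.1, p.1.2))) ?_ ?_ (fun _ _ => rfl) (fun _ _ => rfl) <;>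
      · intro p
        simp [switchedPairs, and_comm]
    _ = (#(ball B v r) * d) ^ 2 := by
      rw [card_product, hB.card_arcs_tail_mem, hB.card_arcs_head_mem, sq]

lemma mem_switchedPairs_switch (ha : a ∈ cycleArcs B r v) (hb : b ∈ farArcs B (r + 1) v) :
    (a, b) ∈ switchedPairs (switch B a b) r v := by
  have hsub : ball (deleteArc B a) v r ⊆ ball (switch B a b) v r :=
    ball_deleteArc_subset_ball_switch (farArcs_anti B v r.le_succ hb)
  obtain ⟨ha, ha₁, ha₂⟩ := mem_cycleArcs.1 ha
  have hb := (mem_farArcs.1 hb).1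
  simp [switchedPairs, switch, hsub ha₁, hsub ha₂, ha, hb]

/-- Double counting of the pairs `(B, switch B a b)`. -/
lemma sum_card_cycleArcs_mul_card_farArcs_le {R : Finset (V → V → Bool)}
    (hreg : ∀ B ∈ R, IsRegular d B)
    (hswitch : ∀ B ∈ R, ∀ a b, IsSwitchable B a b → switch B a b ∈ R) (r : ℕ) (v : V) :
    ∑ B ∈ R, #(cycleArcs B r v) * #(farArcs B (r + 1) v) ≤ #R * ((2 * d + 1) ^ r * d) ^ 2 := by
  calc
    _ = #(R.sigma fun B => cycleArcs B r v ×ˢ farArcs B (r + 1) v) := by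
      simp only [card_sigma, card_product]
    _ ≤ #(R.sigma fun B => switchedPairs B r v) := by
      refine card_le_card_of_injOn (fun s => ⟨switch s.1 s.2.1 s.2.2, s.2⟩) ?_ ?_
      · rintro ⟨B, a, b⟩ h
        simp only [coe_sigma, Set.mem_sigma_iff, mem_coe, mem_product] at h ⊢
        obtain ⟨hB, ha, hb⟩ := h
        exact ⟨hswitch B hB a b (isSwitchable_of_mem ha hb), mem_switchedPairs_switch ha hb⟩
      · rintro ⟨B, a, b⟩ - ⟨B', a', b'⟩ - h
        simp only [Sigma.mk.injEq, heq_eq_eq, Prod.mk.injEq] at h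
        obtain ⟨h, rfl, rfl⟩ := h
        rw [← switch_switch B a b, h, switch_switch]
    _ = ∑ B ∈ R, #(switchedPairs B r v) := card_sigma _ _
    _ ≤ #R * ((2 * d + 1) ^ r * d) ^ 2 := by
      rw [← smul_eq_mul]
      refine sum_le_card_nsmul _ _ _ fun B hB => ?_
      rw [(hreg B hB).card_switchedPairs]
      gcongr
      exact (hreg B hB).card_ball_le v r

theorem sum_card_cycleArcs_mul_le {R : Finset (V → V → Bool)} (hreg : ∀ B ∈ R, IsRegular d B)
    (hswitch : ∀ B ∈ R, ∀ a b, IsSwitchable B a b → switch B a b ∈ R) (r : ℕ) (v : V) :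
    (∑ B ∈ R, #(cycleArcs B r v)) * (Fintype.card V - 2 * (2 * d + 1) ^ (r + 1)) ≤
      #R * (d * (2 * d + 1) ^ (2 * r)) := by
  rcases d.eq_zero_or_pos with rfl | hd
  · have cycleArcs_eq_empty : ∀ B ∈ R, cycleArcs B r v = ∅ := fun B hB =>
      eq_empty_of_forall_notMem fun a ha => ((hreg B hB).degree_pos (mem_cycleArcs.1 ha).1).false
    simp [sum_congr rfl fun B hB => congrArg card (cycleArcs_eq_empty B hB)]
  · refine Nat.le_of_mul_le_mul_left ?_ hd
    calc
      _ = ∑ B ∈ R, #(cycleArcs B r v) *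
          (d * (Fintype.card V - 2 * (2 * d + 1) ^ (r + 1))) := by
        rw [← sum_mul, Nat.mul_left_comm]
      _ ≤ ∑ B ∈ R, #(cycleArcs B r v) * #(farArcs B (r + 1) v) :=
        sum_le_sum fun B hB => Nat.mul_le_mul_left _ ((hreg B hB).le_card_farArcs (r + 1) v)
      _ ≤ #R * ((2 * d + 1) ^ r * d) ^ 2 :=
        sum_card_cycleArcs_mul_card_farArcs_le hreg hswitch r v
      _ = d * (#R * (d * (2 * d + 1) ^ (2 * r))) := by ring

/-- The vertices whose ball of radius `r` is not a tree. -/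
def cyclicVertices (B : V → V → Bool) (r : ℕ) : Finset V :=
  {v | (cycleArcs B r v).Nonempty}

theorem sum_card_cyclicVertices_mul_le {R : Finset (V → V → Bool)}
    (hreg : ∀ B ∈ R, IsRegular d B)
    (hswitch : ∀ B ∈ R, ∀ a b, IsSwitchable B a b → switch B a b ∈ R) (r : ℕ) :
    (∑ B ∈ R, #(cyclicVertices B r)) * (Fintype.card V - 2 * (2 * d + 1) ^ (r + 1)) ≤
      #R * Fintype.card V * (d * (2 * d + 1) ^ (2 * r)) := by
  have card_le (B : V → V → Bool) : #(cyclicVertices B r) ≤ ∑ v, #(cycleArcs B r v) := by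
    rw [cyclicVertices, card_filter]
    refine sum_le_sum fun v _ => ?_
    split_ifs with hv
    exacts [hv.card_pos, Nat.zero_le _]
  calc
    _ ≤ (∑ B ∈ R, ∑ v, #(cycleArcs B r v)) * (Fintype.card V - 2 * (2 * d + 1) ^ (r + 1)) :=
      Nat.mul_le_mul_right _ (sum_le_sum fun B _ => card_le B)
    _ = ∑ v, (∑ B ∈ R, #(cycleArcs B r v)) *
        (Fintype.card V - 2 * (2 * d + 1) ^ (r + 1)) := by rw [sum_comm, sum_mul]
    _ ≤ ∑ _v : V, #R * (d * (2 * d + 1) ^ (2 * r)) :=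
      sum_le_sum fun v _ => sum_card_cycleArcs_mul_le hreg hswitch r v
    _ = _ := by rw [sum_const, card_univ, smul_eq_mul]; ring

end Switching

section FixedPoints

variable [Fintype V] [DecidableEq V] {B : V → V → Bool} {d k r : ℕ}

lemma isDisjointFactors_of_sum_permMatrixHom {ι : Type*} [Fintype ι] {σ : ι → Equiv.Perm V}
    (h : ∀ x y, (if B x y then 1 else 0) = (∑ i, Matrix.permMatrixHom (σ i) : Matrix V V ℕ) x y) :
    IsDisjointFactors B σ := by
  replace h (x y : V) : (if B x y then 1 else 0) = #{i | σ i y = x} := by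
    rw [h, Matrix.sum_apply, card_filter]
    simp only [permMatrixHom_apply_apply]
  refine ⟨fun i x => ?_, fun x i j hij => ?_⟩
  · by_contra hB
    have card_eq := h (σ i x) x
    rw [if_neg hB, eq_comm, card_eq_zero] at card_eq
    exact notMem_empty i (card_eq ▸ by simp)
  · have card_le_one : #{j | σ j x = σ i x} ≤ 1 := by
      rw [← h]
      split_ifs <;> simp
    exact card_le_one_iff.1 card_le_one (by simp) (by simpa using hij.symm)

lemma mul_mword_eq_sum (m : ℕ) (w : Fin k → Bool) :
    m * Mword d w = ∑ i : Fin k → Fin d, if wprod w i = 1 then m else 0 := by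
  rw [← sum_filter, sum_const, smul_eq_mul, mul_comm, Mword, Nat.card_eq_fintype_card,
    Fintype.card_subtype]

lemma IsDisjointFactors.card_fixed_le {ι : Type*} [DecidableEq ι] {σ : ι → Equiv.Perm V}
    (hσ : IsDisjointFactors B σ) {g : FreeGroup ι} (hg : g ≠ 1) (hgr : g.norm ≤ r) :
    #{v | FreeGroup.lift σ g v = v} ≤ #(cyclicVertices B r) := by
  refine card_le_card fun v hv => ?_
  simp only [cyclicVertices, mem_filter, mem_univ, true_and] at hv ⊢
  exact nonempty_iff_ne_empty.2 fun h => hσ.lift_apply_ne h hg hgr hv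

lemma card_mul_mword_le_sum_card_fixed (σ : Fin d → Equiv.Perm V) (w : Fin k → Bool) :
    Fintype.card V * Mword d w ≤
      ∑ i : Fin k → Fin d, #{v | FreeGroup.lift σ (wprod w i) v = v} := by
  rw [mul_mword_eq_sum]
  refine sum_le_sum fun i _ => ?_
  split_ifs with hi <;> simp [hi]

lemma IsDisjointFactors.sum_card_fixed_le {σ : Fin d → Equiv.Perm V}
    (hσ : IsDisjointFactors B σ) (w : Fin k → Bool) :
    ∑ i : Fin k → Fin d, #{v | FreeGroup.lift σ (wprod w i) v = v} ≤
      Fintype.card V * Mword d w + d ^ k * #(cyclicVertices B k) := by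
  have card_words : d ^ k * #(cyclicVertices B k) =
      ∑ _i : Fin k → Fin d, #(cyclicVertices B k) := by simp
  rw [mul_mword_eq_sum, card_words, ← sum_add_distrib]
  refine sum_le_sum fun i _ => ?_
  split_ifs with hi
  · exact (card_le_univ _).trans (Nat.le_add_right _ _)
  · simpa using hσ.card_fixed_le hi (norm_wprod_le w i)

end FixedPoints

section RegularDigraphs

variable {d k n : ℕ} {B : Fin n → Fin n → Bool}

lemma mem_regDigraphs : B ∈ regDigraphs d n ↔ IsRegular d B := by
  simp only [regDigraphs, mem_filter, mem_univ, true_and, IsRegB]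
  exact ⟨fun ⟨h₁, h₂, h₃⟩ => ⟨h₁, h₂, h₃⟩, fun ⟨h₁, h₂, h₃⟩ => ⟨h₁, h₂, h₃⟩⟩

lemma IsRegular.exists_adjB_eq (hB : IsRegular d B) :
    ∃ σ : Fin d → Equiv.Perm (Fin n),
      IsDisjointFactors B σ ∧ adjB B = ∑ i, Matrix.permMatrixHom (σ i) := by
  obtain ⟨σ, hσ⟩ := exists_eq_sum_permMatrixHom d (adjB B)
    (fun x => (card_filter _ _).symm.trans (hB.card_out x))
    (fun y => (card_filter _ _).symm.trans (hB.card_in y))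
  exact ⟨σ, isDisjointFactors_of_sum_permMatrixHom fun x y => congrFun₂ hσ x y, hσ⟩

lemma IsRegular.mul_mword_le_trace (hB : IsRegular d B) (w : Fin k → Bool) :
    n * Mword d w ≤ Matrix.trace (wMat (adjB B) w) := by
  obtain ⟨σ, -, hAσ⟩ := hB.exists_adjB_eq
  rw [hAσ, trace_wMat_sum_permMatrixHom]
  simpa only [Fintype.card_fin] using card_mul_mword_le_sum_card_fixed σ w

lemma IsRegular.trace_le (hB : IsRegular d B) (w : Fin k → Bool) :
    Matrix.trace (wMat (adjB B) w) ≤ n * Mword d w + d ^ k * #(cyclicVertices B k) := by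
  obtain ⟨σ, hσ, hAσ⟩ := hB.exists_adjB_eq
  rw [hAσ, trace_wMat_sum_permMatrixHom]
  simpa only [Fintype.card_fin] using hσ.sum_card_fixed_le w

/-- The Cayley digraph of an additive group with connection set `S`. -/
def cayleyDigraph [AddGroup V] [DecidableEq V] (S : Finset V) : V → V → Bool :=
  fun x y => decide (y - x ∈ S)

lemma isRegular_cayleyDigraph [Fintype V] [DecidableEq V] [AddGroup V] {S : Finset V}
    (hS : 0 ∉ S) : IsRegular #S (cayleyDigraph S) where
  loopless x := by simpa [cayleyDigraph] using hS
  card_out x := card_equiv (Equiv.subRight x) fun y => by simp [cayleyDigraph]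
  card_in y := card_equiv (Equiv.subLeft y) fun x => by simp [cayleyDigraph]

lemma regDigraphs_nonempty (hdn : d < n) : (regDigraphs d n).Nonempty := by
  have : NeZero n := ⟨by omega⟩
  have hd : d ≤ #(univ.erase (0 : Fin n)) := by
    rw [card_erase_of_mem (mem_univ _), card_fin]
    omega
  obtain ⟨S, hS, rfl⟩ := exists_subset_card_eq hd
  exact ⟨cayleyDigraph S,
    mem_regDigraphs.2 (isRegular_cayleyDigraph fun h => notMem_erase _ _ (hS h))⟩

end RegularDigraphs

section ExpectedTrace

open Filter Topology

variable {d k n : ℕ}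

lemma sum_card_cyclicVertices_regDigraphs_mul_le (d n r : ℕ) :
    (∑ B ∈ regDigraphs d n, #(cyclicVertices B r)) * (n - 2 * (2 * d + 1) ^ (r + 1)) ≤
      #(regDigraphs d n) * n * (d * (2 * d + 1) ^ (2 * r)) := by
  simpa only [Fintype.card_fin] using
    sum_card_cyclicVertices_mul_le (R := regDigraphs d n) (fun B => mem_regDigraphs.1)
      (fun B hB a b h => mem_regDigraphs.2 ((mem_regDigraphs.1 hB).switch h)) r

/-- The expected proportion of vertices in a uniformly random `d`-regular digraph on `n` vertices
whose ball of radius `r` is not a tree. -/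
noncomputable def meanCyclic (d n r : ℕ) : ℝ :=
  (∑ B ∈ regDigraphs d n, (#(cyclicVertices B r) : ℝ)) / (#(regDigraphs d n) * n)

lemma meanCyclic_le {r : ℕ} (hn : 2 * (2 * d + 1) ^ (r + 1) < n) :
    meanCyclic d n r ≤ (d * (2 * d + 1) ^ (2 * r) : ℕ) / (n - (2 * (2 * d + 1) ^ (r + 1) : ℕ)) := by
  refine div_le_of_le_mul₀ (by positivity) ?_ ?_
  · exact div_nonneg (Nat.cast_nonneg _) (sub_nonneg.2 (Nat.cast_le.2 hn.le))
  · rw [div_mul_eq_mul_div, le_div_iff₀ (sub_pos.2 (Nat.cast_lt.2 hn)), ← Nat.cast_sub hn.le,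
      mul_comm (Nat.cast _)]
    exact_mod_cast sum_card_cyclicVertices_regDigraphs_mul_le d n r

theorem tendsto_meanCyclic (d r : ℕ) : Tendsto (fun n => meanCyclic d n r) atTop (𝓝 0) := by
  have meanCyclic_nonneg (n : ℕ) : 0 ≤ meanCyclic d n r := by
    unfold meanCyclic
    positivity
  have tendsto_bound := (tendsto_atTop_add_const_right _ (-((2 * (2 * d + 1) ^ (r + 1) : ℕ) : ℝ))
    tendsto_natCast_atTop_atTop).const_div_atTop ((d * (2 * d + 1) ^ (2 * r) : ℕ) : ℝ)
  exact squeeze_zero' (.of_forall meanCyclic_nonneg)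
    ((eventually_gt_atTop _).mono fun n hn => meanCyclic_le hn) tendsto_bound

/-- The normalized trace of `A^w`, averaged over all `d`-regular digraphs on `n` vertices. -/
noncomputable def meanTrace (d n : ℕ) {k : ℕ} (w : Fin k → Bool) : ℝ :=
  (#(regDigraphs d n) : ℝ)⁻¹ *
    ∑ B ∈ regDigraphs d n, ((Matrix.trace (wMat (adjB B) w) : ℕ) : ℝ) / n

lemma mword_le_meanTrace (hdn : d < n) (w : Fin k → Bool) : Mword d w ≤ meanTrace d n w := by
  have hn : (0 : ℝ) < n := Nat.cast_pos.2 (by omega)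
  have hR : (0 : ℝ) < #(regDigraphs d n) := Nat.cast_pos.2 (regDigraphs_nonempty hdn).card_pos
  rw [meanTrace, inv_mul_eq_div, le_div_iff₀' hR, ← nsmul_eq_mul]
  refine card_nsmul_le_sum _ _ _ fun B hB => ?_
  rw [le_div_iff₀' hn]
  exact_mod_cast (mem_regDigraphs.1 hB).mul_mword_le_trace w

lemma meanTrace_le (hdn : d < n) (w : Fin k → Bool) :
    meanTrace d n w ≤ Mword d w + d ^ k * meanCyclic d n k := by
  have hn : (0 : ℝ) < n := Nat.cast_pos.2 (by omega)
  have hR : (0 : ℝ) < #(regDigraphs d n) := Nat.cast_pos.2 (regDigraphs_nonempty hdn).card_pos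
  rw [meanTrace, inv_mul_eq_div, ← sum_div, div_div, mul_comm (n : ℝ), div_le_iff₀ (mul_pos hR hn),
    add_mul, meanCyclic, mul_assoc, div_mul_cancel₀ _ (mul_pos hR hn).ne']
  calc
    ∑ B ∈ regDigraphs d n, ((Matrix.trace (wMat (adjB B) w) : ℕ) : ℝ)
    _ ≤ ∑ B ∈ regDigraphs d n, ((n * Mword d w : ℝ) + d ^ k * #(cyclicVertices B k)) :=
      sum_le_sum fun B hB => mod_cast (mem_regDigraphs.1 hB).trace_le w
    _ = _ := by
      rw [sum_add_distrib, sum_const, nsmul_eq_mul, ← mul_sum]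
      ring

end ExpectedTrace

end StarMoments

open Filter in
theorem star_moments_uniform_regular_digraphs_general (d k : ℕ) (w : Fin k → Bool) :
    Tendsto
      (fun n : ℕ => ((regDigraphs d n).card : ℝ)⁻¹ *
        ∑ B ∈ regDigraphs d n, ((Matrix.trace (wMat (adjB B) w) : ℕ) : ℝ) / n)
      atTop (nhds (Mword d w : ℝ)) := by
  have tendsto_upper := ((StarMoments.tendsto_meanCyclic d k).const_mul ((d : ℝ) ^ k)).const_add
    (Mword d w : ℝ)
  rw [mul_zero, add_zero] at tendsto_upper
  exact tendsto_of_tendsto_of_tendsto_of_le_of_le' tendsto_const_nhds tendsto_upper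
    ((eventually_gt_atTop d).mono fun n hdn => StarMoments.mword_le_meanTrace hdn w)
    ((eventually_gt_atTop d).mono fun n hdn => StarMoments.meanTrace_le hdn w)

open Filter in
/-- Convergence of star moments for uniform `d`-regular digraphs:
`(1/n) E[Tr(A_{d,n}^w)] → M_d(w)` as `n → ∞`, where the expectation is the uniform
average over all `d`-regular digraphs on `{1,…,n}`. -/
theorem star_moments_uniform_regular_digraphs (d k : ℕ) (hd : 2 ≤ d) (w : Fin k → Bool) :
    Tendsto
      (fun n : ℕ => ((regDigraphs d n).card : ℝ)⁻¹ *
        ∑ B ∈ regDigraphs d n, ((Matrix.trace (wMat (adjB B) w) : ℕ) : ℝ) / n)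
      atTop (nhds ((Mword d w : ℝ))) :=
  star_moments_uniform_regular_digraphs_general d k w
end

section
/- For every integer d ≥ 2, every k ≥ 0, and every word w ∈ Σ^k, the number of w-paths satisfies M_d(w) = Σ_{π∈ANC(w)} ( ∏_{V∈π} (−1)^{|V|/2−1} C_{|V|/2−1} ) · d^{|π|}, where |π| is the number of blocks of π. -/
/-- `π` is a partition of `[k]`: no empty block, and every element lies in
exactly one block. -/
def IsPartitionF {k : ℕ} (π : Finset (Finset (Fin k))) : Prop :=
  (∅ ∉ π) ∧ ∀ t : Fin k, ∃! S, S ∈ π ∧ t ∈ S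

/-- `a` and `b` lie in a common block of `π`. -/
def SameBlockF {k : ℕ} (π : Finset (Finset (Fin k))) (a b : Fin k) : Prop :=
  ∃ S ∈ π, a ∈ S ∧ b ∈ S

/-- `π` is non-crossing: there are no `i₁ < i₂ < j₁ < j₂` with `i₁ ∼ j₁`, `i₂ ∼ j₂`
and `i₁ ≁ i₂`. -/
def NonCrossingF {k : ℕ} (π : Finset (Finset (Fin k))) : Prop :=
  ∀ i₁ i₂ j₁ j₂ : Fin k, i₁ < i₂ → i₂ < j₁ → j₁ < j₂ →
    SameBlockF π i₁ j₁ → SameBlockF π i₂ j₂ → SameBlockF π i₁ i₂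

/-- A list of letters is alternating: it has even length and equals `1*1*⋯1*`
or `*1*1⋯*1`. -/
def IsAltList (u : List Bool) : Prop :=
  u.length % 2 = 0 ∧
    ((∀ m (h : m < u.length), u.get ⟨m, h⟩ = decide (m % 2 = 0)) ∨
     (∀ m (h : m < u.length), u.get ⟨m, h⟩ = decide (m % 2 = 1)))

/-- Every block of `π`, read in increasing order, induces an alternating subword of `w`. -/
def AltBlocks {k : ℕ} (w : Fin k → Bool) (π : Finset (Finset (Fin k))) : Prop :=
  ∀ S ∈ π, IsAltList ((S.sort (· ≤ ·)).map w)

open Classical in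
/-- The set `ANC(w)` of alternating non-crossing partitions of `w`. -/
noncomputable def ANC {k : ℕ} (w : Fin k → Bool) : Finset (Finset (Finset (Fin k))) :=
  Finset.univ.filter fun π => IsPartitionF π ∧ NonCrossingF π ∧ AltBlocks w π

section AlternatingWords

variable {Γ : Type*} {x y z : Γ × Bool} {u v : List (Γ × Bool)}

/-- The letters `x` and `y` of a free group (a generator with a sign, as in `FreeGroup.mk`) are
inverse to each other. -/
def Cancels (x y : Γ × Bool) : Prop := x.1 = y.1 ∧ x.2 ≠ y.2

lemma Cancels.symm (h : Cancels x y) : Cancels y x := ⟨h.1.symm, h.2.symm⟩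

lemma Cancels.eq_of_cancels (hxy : Cancels x y) (hyz : Cancels y z) : x = z :=
  Prod.ext (hxy.1.trans hyz.1)
    ((Bool.eq_not.2 hxy.2).trans (Bool.eq_not.2 hyz.2.symm).symm)

lemma isChain_cancels_iff : u.IsChain Cancels ↔
    (u.map Prod.snd).IsChain (· ≠ ·) ∧ ∀ x ∈ u, ∀ y ∈ u, x.1 = y.1 := by
  have : Std.Symm fun x y : Γ × Bool ↦ x.1 = y.1 := ⟨fun _ _ ↦ Eq.symm⟩
  have : IsTrans (Γ × Bool) fun x y ↦ x.1 = y.1 := ⟨fun _ _ _ ↦ Eq.trans⟩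
  have hconst : (∀ x ∈ u, ∀ y ∈ u, x.1 = y.1) ↔ u.IsChain fun x y ↦ x.1 = y.1 := by
    rw [List.isChain_iff_pairwise]
    exact ⟨List.pairwise_of_forall_mem_list, fun h x hx y hy ↦
      h.forall_of_forall (R := fun x y ↦ x.1 = y.1) (fun _ _ ↦ rfl) hx hy⟩
  rw [hconst, List.isChain_map]
  simp only [List.isChain_iff_getElem, Cancels, ← forall_and, and_comm]

lemma exists_cancels_of_not_isReduced (hu : ¬ FreeGroup.IsReduced u) :
    ∃ u₁ x y u₂, u = u₁ ++ x :: y :: u₂ ∧ Cancels x y := by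
  rw [FreeGroup.IsReduced, List.isChain_iff_forall_rel_of_append_cons_cons] at hu
  push Not at hu
  obtain ⟨x, y, u₁, u₂, rfl, hxy⟩ := hu
  exact ⟨u₁, x, y, u₂, rfl, hxy⟩

lemma mk_append_cons_cons (hxy : Cancels x y) :
    FreeGroup.mk (u ++ x :: y :: v) = FreeGroup.mk (u ++ v) := by
  obtain rfl : y = (x.1, !x.2) := Prod.ext hxy.1.symm (Bool.eq_not.2 hxy.2.symm)
  exact Quot.sound FreeGroup.Red.Step.not

/-- The word `u` is of the form `g g⁻¹ g g⁻¹ ⋯ g g⁻¹` for a single letter `g`; the coloured analogue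
of `IsAltList`. -/
def IsAlternating (u : List (Γ × Bool)) : Prop := Even u.length ∧ u.IsChain Cancels

lemma cancels_of_isChain_of_even (hv : Even v.length) (h : (x :: (v ++ [y])).IsChain Cancels) :
    Cancels x y := by
  induction v using List.twoStepInduction generalizing x with
  | nil => simpa using h
  | singleton a => simp at hv
  | cons_cons a b v ih _ =>
    simp only [List.cons_append, List.isChain_cons_cons] at h
    obtain ⟨hxa, hab, hb⟩ := h
    rw [hxa.eq_of_cancels hab]
    exact ih (by simpa [Nat.even_add_one] using hv) hb

lemma isAlternating_cons_iff_append_singleton :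
    IsAlternating (x :: v) ↔ IsAlternating (v ++ [x]) := by
  unfold IsAlternating
  rw [List.length_append, List.length_cons, List.length_singleton]
  refine and_congr_right fun heven ↦ ⟨fun h ↦ ?_, fun h ↦ ?_⟩
  · obtain rfl | ⟨v, y, rfl⟩ := v.eq_nil_or_concat'
    · simp
    · have hxy : Cancels x y :=
        cancels_of_isChain_of_even (by simpa [Nat.even_add_one] using heven) h
      simpa using List.isChain_append_cons_cons.2
        ⟨h.tail, hxy.symm, List.isChain_singleton x⟩
  · cases v with
    | nil => simp
    | cons y v =>
      have hyx : Cancels y x :=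
        cancels_of_isChain_of_even (by simpa [Nat.even_add_one] using heven) h
      exact List.isChain_cons_cons.2 ⟨hyx.symm, h.left_of_append⟩

lemma isAlternating_append_comm : IsAlternating (u ++ v) ↔ IsAlternating (v ++ u) := by
  induction u generalizing v with
  | nil => simp
  | cons x u ih =>
    rw [List.cons_append, isAlternating_cons_iff_append_singleton, List.append_assoc, ih,
      List.append_assoc, List.singleton_append]

lemma isAlternating_cons_append_concat_iff (hxy : Cancels x y) (hu : Even (x :: u).length) :
    IsAlternating ((x :: u) ++ (v ++ [y])) ↔ IsAlternating (x :: u) ∧ IsAlternating (v ++ [y]) := by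
  rw [isAlternating_append_comm]
  unfold IsAlternating
  rw [List.append_assoc, List.singleton_append, List.isChain_append_cons_cons,
    ← List.singleton_append, ← List.append_assoc, List.length_append, Nat.even_add]
  have := hxy.symm
  tauto

end AlternatingWords

section CatalanWeights

/-- The weight `(-1)^(n/2-1) C_{n/2-1}` of a block of (even, positive) size `n`. -/
def blockWeight (n : ℕ) : ℤ := (-1) ^ (n / 2 - 1) * catalan (n / 2 - 1)

/-- The signed Catalan recursion: it makes merging two blocks cancel against splitting one. -/
lemma sum_blockWeight_mul_blockWeight (m : ℕ) :
    ∑ ij ∈ Finset.HasAntidiagonal.antidiagonal m,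
        blockWeight (2 * (ij.1 + 1)) * blockWeight (2 * (ij.2 + 1)) =
      -blockWeight (2 * (m + 2)) := by
  have hterm (i : ℕ) : blockWeight (2 * (i + 1)) = (-1) ^ i * catalan i := by simp [blockWeight]
  rw [show m + 2 = m + 1 + 1 from rfl]
  simp only [hterm, catalan_succ', pow_succ]
  push_cast
  rw [mul_neg_one, neg_mul, neg_neg, Finset.mul_sum]
  refine Finset.sum_congr rfl fun ij hij ↦ ?_
  rw [← Finset.HasAntidiagonal.mem_antidiagonal.1 hij, pow_add]
  ring

end CatalanWeights

section SetPartitions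

variable {α : Type*} [DecidableEq α] {A S T : Finset α} {π ρ : Finset (Finset α)} {a : α}

/-- `π` is a set partition of `A`. The blocks are kept as a bare `Finset`, as in `IsPartitionF`
(rather than as a `Finpartition A`), so that blocks can be removed and merged freely. -/
structure IsPartitionOf (A : Finset α) (π : Finset (Finset α)) : Prop where
  empty_notMem : ∅ ∉ π
  pairwiseDisjoint : (π : Set (Finset α)).PairwiseDisjoint id
  sup_eq : π.sup id = A

namespace IsPartitionOf

lemma subset (h : IsPartitionOf A π) (hS : S ∈ π) : S ⊆ A :=
  h.sup_eq ▸ Finset.le_sup (f := id) hS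

lemma exists_mem (h : IsPartitionOf A π) (ha : a ∈ A) : ∃ S ∈ π, a ∈ S := by
  simpa [← h.sup_eq, Finset.mem_sup] using ha

lemma eq_of_mem (h : IsPartitionOf A π) (hS : S ∈ π) (hT : T ∈ π) (haS : a ∈ S) (haT : a ∈ T) :
    S = T :=
  h.pairwiseDisjoint.elim_finset hS hT a haS haT

end IsPartitionOf

lemma isPartitionOf_insert_iff (hS : S ∉ ρ) :
    IsPartitionOf A (insert S ρ) ↔ S.Nonempty ∧ S ⊆ A ∧ IsPartitionOf (A \ S) ρ := by
  have hsup : S ∪ ρ.sup id = A ∧ Disjoint S (ρ.sup id) ↔ S ⊆ A ∧ ρ.sup id = A \ S := by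
    constructor
    · rintro ⟨rfl, h⟩
      exact ⟨Finset.subset_union_left, by rw [Finset.union_sdiff_cancel_left h]⟩
    · rintro ⟨hSA, h⟩
      exact ⟨by rw [h, Finset.union_sdiff_of_subset hSA], h ▸ Finset.disjoint_sdiff⟩
  rw [Finset.disjoint_sup_right] at hsup
  have hdisj : ((insert S ρ : Finset (Finset α)) : Set (Finset α)).PairwiseDisjoint id ↔
      (ρ : Set (Finset α)).PairwiseDisjoint id ∧ ∀ T ∈ ρ, Disjoint S T := by
    rw [Finset.coe_insert, Set.pairwiseDisjoint_insert_of_notMem (by simpa using hS)]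
    simp
  constructor
  · rintro ⟨h₁, h₂, h₃⟩
    simp only [Finset.mem_insert, not_or] at h₁
    rw [Finset.sup_insert] at h₃
    obtain ⟨hρ, hSρ⟩ := hdisj.1 h₂
    obtain ⟨hSA, h⟩ := hsup.1 ⟨h₃, by simpa using hSρ⟩
    exact ⟨Finset.nonempty_iff_ne_empty.2 (Ne.symm h₁.1), hSA, h₁.2, hρ, h⟩
  · rintro ⟨hne, hSA, h₁, h₂, h₃⟩
    obtain ⟨hA, h⟩ := hsup.2 ⟨hSA, h₃⟩
    exact ⟨by simp [h₁, hne.ne_empty.symm], hdisj.2 ⟨h₂, by simpa using h⟩,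
      by simpa using hA⟩

/-- The block of the partition `π` that contains `a`. -/
def blockOf (π : Finset (Finset α)) (a : α) : Finset α := {S ∈ π | a ∈ S}.sup id

lemma blockOf_insert (ha : a ∈ S) (hρ : ∀ T ∈ ρ, a ∉ T) : blockOf (insert S ρ) a = S := by
  rw [blockOf, Finset.filter_insert, if_pos ha, Finset.filter_false_of_mem hρ,
    insert_empty_eq, Finset.sup_singleton, id]

namespace IsPartitionOf

lemma blockOf_eq (h : IsPartitionOf A π) (hS : S ∈ π) (ha : a ∈ S) : blockOf π a = S := by
  rw [← Finset.insert_erase hS]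
  exact blockOf_insert ha fun T hT haT ↦
    Finset.ne_of_mem_erase hT (h.eq_of_mem (Finset.mem_of_mem_erase hT) hS haT ha)

lemma blockOf_mem (h : IsPartitionOf A π) (ha : a ∈ A) : blockOf π a ∈ π := by
  obtain ⟨S, hS, haS⟩ := h.exists_mem ha
  rwa [h.blockOf_eq hS haS]

lemma mem_blockOf (h : IsPartitionOf A π) (ha : a ∈ A) : a ∈ blockOf π a := by
  obtain ⟨S, hS, haS⟩ := h.exists_mem ha
  rwa [h.blockOf_eq hS haS]

end IsPartitionOf

/-- The product of the block weights, i.e. the coefficient of `π` in the star moment formula. -/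
def partitionWeight (π : Finset (Finset α)) : ℤ := ∏ S ∈ π, blockWeight S.card

lemma partitionWeight_insert (hS : S ∉ ρ) :
    partitionWeight (insert S ρ) = blockWeight S.card * partitionWeight ρ :=
  Finset.prod_insert hS

lemma partitionWeight_eq_mul_erase (hS : S ∈ π) :
    partitionWeight π = blockWeight S.card * partitionWeight (π.erase S) :=
  (Finset.mul_prod_erase π _ hS).symm

end SetPartitions

section NonCrossing

variable {α : Type*} {S T Q P : Finset α} {l u v : List α} {a b p q x : α}

/-- No two elements of `S` interlace with two elements of `T` along the list `l`, which is thought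
of as duplicate-free and gives the order of the positions. -/
def NonCrossing (l : List α) (S T : Finset α) : Prop :=
  ∀ a ∈ S, ∀ b ∈ T, ∀ a' ∈ S, ∀ b' ∈ T,
    ¬ [a, b, a', b'].Sublist l ∧ ¬ [b, a, b', a'].Sublist l

lemma NonCrossing.symm (h : NonCrossing l S T) : NonCrossing l T S :=
  fun a ha b hb a' ha' b' hb' ↦ (h b hb a ha b' hb' a' ha').symm

lemma NonCrossing.of_sublist (h : NonCrossing l S T) (hul : u.Sublist l) : NonCrossing u S T :=
  fun a ha b hb a' ha' b' hb' ↦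
    (h a ha b hb a' ha' b' hb').imp (mt fun hs ↦ hs.trans hul) (mt fun hs ↦ hs.trans hul)

lemma NonCrossing.cons_of_append_singleton (h : NonCrossing (u ++ [x]) S T) :
    NonCrossing (x :: u) S T := by
  intro a ha b hb a' ha' b' hb'
  constructor <;> intro hs <;> rcases List.cons_sublist_cons'.1 hs with h' | ⟨rfl, h'⟩
  · exact (h a ha b hb a' ha' b' hb').1 (h'.trans (List.sublist_append_left ..))
  · exact (h a' ha' b hb a ha b' hb').2 (h'.append (.refl [a]))
  · exact (h a ha b hb a' ha' b' hb').2 (h'.trans (List.sublist_append_left ..))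
  · exact (h a ha b' hb' a' ha' b hb).1 (h'.append (.refl [b]))

lemma NonCrossing.append_comm (h : NonCrossing (u ++ v) S T) : NonCrossing (v ++ u) S T := by
  induction v using List.reverseRecOn generalizing u with
  | nil => simpa using h
  | append_singleton v x ih =>
    rw [← List.append_assoc] at h
    simpa using ih h.cons_of_append_singleton

/-- Along the list `l`, no element of `P` comes before an element of `Q`. -/
def Precedes (l : List α) (Q P : Finset α) : Prop :=
  ∀ a ∈ Q, ∀ b ∈ P, ¬ [b, a].Sublist l

lemma Precedes.nonCrossing (h : Precedes l Q P) : NonCrossing l Q P :=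
  fun a _ b hb a' ha' _ _ ↦
    ⟨fun hs ↦ h a' ha' b hb (.trans (by simp) hs), fun hs ↦ h a' ha' b hb (.trans (by simp) hs)⟩

lemma Precedes.filter_union [DecidableEq α] (h : Precedes l Q P) (hQP : Disjoint Q P) :
    l.filter (· ∈ Q ∪ P) = l.filter (· ∈ Q) ++ l.filter (· ∈ P) := by
  induction l with
  | nil => rfl
  | cons x l ih =>
    replace ih := ih fun a ha b hb hs ↦ h a ha b hb (hs.cons x)
    by_cases hxQ : x ∈ Q
    · simpa [hxQ, Finset.disjoint_left.1 hQP hxQ] using ih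
    by_cases hxP : x ∈ P
    · have hQ : l.filter (· ∈ Q) = [] := by
        simp only [List.filter_eq_nil_iff, decide_eq_true_eq]
        exact fun a ha haQ ↦ h a haQ x hxP (by simpa using ha)
      simpa [hxQ, hxP, hQ] using ih
    · simpa [hxQ, hxP] using ih

lemma not_sublist_cons (hl : (q :: u).Nodup) : ¬ [a, q].Sublist (q :: u) := by
  intro h
  rcases List.cons_sublist_cons'.1 h with h | ⟨-, h⟩ <;>
    exact (List.nodup_cons.1 hl).1 (h.subset (by simp))

lemma not_sublist_append_singleton (hl : (u ++ [p]).Nodup) : ¬ [p, a].Sublist (u ++ [p]) := by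
  rw [← List.reverse_sublist]
  rw [← List.nodup_reverse] at hl
  simpa using not_sublist_cons (a := a) (u := u.reverse) (by simpa using hl)

lemma sublist_of_sublist_cons_of_notMem {s : List α} (h : s.Sublist (q :: u)) (hq : q ∉ s) :
    s.Sublist u := by
  obtain h | ⟨r, rfl, -⟩ := List.sublist_cons_iff.1 h
  · exact h
  · simp at hq

lemma sublist_of_sublist_append_singleton_of_notMem {s : List α} (h : s.Sublist (u ++ [p]))
    (hp : p ∉ s) : s.Sublist u := by
  rw [← List.reverse_sublist] at h ⊢
  exact sublist_of_sublist_cons_of_notMem (by simpa using h) (by simpa using hp)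

lemma notMem_of_nodup_cons_append_singleton (hl : (q :: (u ++ [p])).Nodup) :
    q ∉ u ++ [p] ∧ p ∉ q :: u :=
  ⟨(List.nodup_cons.1 hl).1, (List.nodup_cons.1 (List.nodup_append_comm (l₁ := q :: u).1 hl)).1⟩

lemma nonCrossing_cons_append_singleton_iff [DecidableEq α] (hq : q ∉ S ∪ T) (hp : p ∉ S ∪ T) :
    NonCrossing (q :: (u ++ [p])) S T ↔ NonCrossing u S T := by
  have hu : u.Sublist (q :: (u ++ [p])) := .cons q (List.sublist_append_left ..)
  refine ⟨fun h ↦ h.of_sublist hu, fun h a ha b hb a' ha' b' hb' ↦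
    (h a ha b hb a' ha' b' hb').imp (mt fun hs ↦ ?_) (mt fun hs ↦ ?_)⟩ <;>
  exact sublist_of_sublist_append_singleton_of_notMem
    (sublist_of_sublist_cons_of_notMem hs (by grind)) (by grind)

lemma nonCrossing_pair [DecidableEq α] (hl : (q :: (u ++ [p])).Nodup) :
    NonCrossing (q :: (u ++ [p])) {q, p} T := by
  have hlast (x : α) : ¬ [p, x].Sublist (q :: (u ++ [p])) :=
    not_sublist_append_singleton (u := q :: u) hl
  intro a ha b hb a' ha' b' hb'
  rw [Finset.mem_insert, Finset.mem_singleton] at ha ha'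
  constructor <;> intro hs
  · obtain rfl | rfl := ha'
    · exact not_sublist_cons (a := a) hl (.trans (by simp) hs)
    · exact hlast b' (.trans (by simp) hs)
  · obtain rfl | rfl := ha
    · exact not_sublist_cons (a := b) hl (.trans (by simp) hs)
    · exact hlast b' (.trans (by simp) hs)

lemma NonCrossing.precedes (hl : (q :: (u ++ [p])).Nodup)
    (h : NonCrossing (q :: (u ++ [p])) Q P) (hQP : Disjoint Q P) (hqQ : q ∈ Q) (hpP : p ∈ P) :
    Precedes (q :: (u ++ [p])) Q P := by
  intro a ha b hb hs
  have hbq : q ≠ b := fun h ↦ Finset.disjoint_left.1 hQP hqQ (h ▸ hb)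
  have hap : p ≠ a := fun h ↦ Finset.disjoint_left.1 hQP (h ▸ ha) hpP
  have haq : q ≠ a := by rintro rfl; exact not_sublist_cons hl hs
  have hbp : p ≠ b := by
    rintro rfl
    exact not_sublist_append_singleton (u := q :: u) hl hs
  have hba : [b, a].Sublist u :=
    sublist_of_sublist_append_singleton_of_notMem
      (sublist_of_sublist_cons_of_notMem hs (by simp [hbq, haq])) (by simp [hbp, hap])
  exact (h q hqQ b hb a ha p hpP).1 ((hba.append (.refl [p])).cons_cons q)

lemma nonCrossing_union_iff [DecidableEq α] (hl : (q :: (u ++ [p])).Nodup)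
    (hQP : Precedes (q :: (u ++ [p])) Q P) (hqQ : q ∈ Q) (hpP : p ∈ P) (hqT : q ∉ T)
    (hpT : p ∉ T) :
    NonCrossing (q :: (u ++ [p])) (Q ∪ P) T ↔
      NonCrossing (q :: (u ++ [p])) Q T ∧ NonCrossing (q :: (u ++ [p])) P T := by
  refine ⟨fun h ↦ ⟨fun a ha b hb a' ha' ↦ h a (by simp [ha]) b hb a' (by simp [ha']),
    fun a ha b hb a' ha' ↦ h a (by simp [ha]) b hb a' (by simp [ha'])⟩, ?_⟩
  rintro ⟨hQ, hP⟩ a ha b hb a' ha' b' hb'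
  obtain ha | ha := Finset.mem_union.1 ha <;> obtain ha' | ha' := Finset.mem_union.1 ha'
  · exact hQ a ha b hb a' ha' b' hb'
  · constructor <;> intro hs
    · have hpa' : p ≠ a' := by
        rintro rfl
        exact not_sublist_append_singleton (u := q :: u) hl (a := b') (.trans (by simp) hs)
      have hs' : [b, a', b'].Sublist (q :: u) :=
        sublist_of_sublist_append_singleton_of_notMem (.trans (by simp) hs) (by grind)
      exact (hP a' ha' b hb p hpP b' hb').2 (hs'.append (.refl [p]))
    · have hqa : q ≠ a := by
        rintro rfl
        exact not_sublist_cons hl (a := b) (.trans (by simp) hs)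
      have hs' : [b, a, b'].Sublist (u ++ [p]) :=
        sublist_of_sublist_cons_of_notMem (.trans (by simp) hs) (by grind)
      exact (hQ q hqQ b hb a ha b' hb').1 (hs'.cons_cons q)
  · exact ⟨fun hs ↦ hQP a' ha' a ha (.trans (by simp) hs),
      fun hs ↦ hQP a' ha' a ha (.trans (by simp) hs)⟩
  · exact hP a ha b hb a' ha' b' hb'

end NonCrossing

section InitialPart

variable {α : Type*} [DecidableEq α] {l u : List α} {p q : α} {W Q P : Finset α} {n : ℕ}

lemma length_filter_mem (hl : l.Nodup) (hW : W ⊆ l.toFinset) :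
    (l.filter (· ∈ W)).length = W.card := by
  rw [← List.toFinset_card_of_nodup (hl.filter _)]
  congr 1
  ext x
  simpa using fun hx ↦ List.mem_toFinset.1 (hW hx)

/-- The first `n` elements of `W` along the list `l`. -/
def initialPart (l : List α) (W : Finset α) (n : ℕ) : Finset α :=
  ((l.filter (· ∈ W)).take n).toFinset

lemma initialPart_subset : initialPart l W n ⊆ W := fun x hx ↦ by
  simpa using (List.mem_filter.1 (List.mem_of_mem_take (List.mem_toFinset.1 hx))).2

lemma card_initialPart (hl : l.Nodup) (hW : W ⊆ l.toFinset) (hn : n ≤ W.card) :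
    (initialPart l W n).card = n := by
  rw [initialPart, List.toFinset_card_of_nodup ((hl.filter _).sublist (List.take_sublist ..)),
    List.length_take, length_filter_mem hl hW, min_eq_left hn]

lemma mem_initialPart (hq : q ∈ W) (hn : 0 < n) : q ∈ initialPart (q :: u) W n := by
  obtain ⟨n, rfl⟩ := Nat.exists_eq_add_of_lt hn
  simp [initialPart, hq]

lemma notMem_initialPart (hl : (u ++ [p]).Nodup) (hp : p ∈ W) (hW : W ⊆ (u ++ [p]).toFinset)
    (hn : n < W.card) : p ∉ initialPart (u ++ [p]) W n := by
  have hpu : p ∉ u := by grind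
  have hlen := length_filter_mem hl hW
  rw [List.filter_append, List.length_append] at hlen
  have hle : n ≤ (u.filter (· ∈ W)).length := by
    simp only [hp, decide_true, List.filter_cons_of_pos, List.filter_nil,
      List.length_singleton] at hlen
    omega
  rw [initialPart, List.filter_append, List.take_append_of_le_length hle, List.mem_toFinset]
  exact fun h ↦ hpu (List.mem_of_mem_filter (List.mem_of_mem_take h))

lemma precedes_initialPart (hl : l.Nodup) :
    Precedes l (initialPart l W n) (W \ initialPart l W n) := by
  intro a ha b hb hs
  rw [Finset.mem_sdiff] at hb
  have hs' : [b, a].Sublist ((l.filter (· ∈ W)).take n ++ (l.filter (· ∈ W)).drop n) := by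
    rw [List.take_append_drop]
    simpa [hb.1, initialPart_subset ha] using hs.filter (· ∈ W)
  rw [initialPart, List.mem_toFinset] at ha hb
  obtain ⟨s, t, hst, hsub, htub⟩ := List.sublist_append_iff.1 hs'
  cases s with
  | nil =>
    obtain rfl : [b, a] = t := hst
    exact List.disjoint_take_drop (hl.filter _) le_rfl ha (htub.subset (by simp))
  | cons c s =>
    obtain ⟨rfl, -⟩ := List.cons_eq_cons.1 hst
    exact hb.2 (hsub.subset (by simp))

lemma Precedes.initialPart_union (hl : l.Nodup) (h : Precedes l Q P) (hQP : Disjoint Q P)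
    (hQ : Q ⊆ l.toFinset) : initialPart l (Q ∪ P) Q.card = Q := by
  rw [initialPart, h.filter_union hQP, List.take_left' (length_filter_mem hl hQ)]
  ext x
  simpa using fun hx ↦ List.mem_toFinset.1 (hQ hx)

end InitialPart

section AlternatingNonCrossing

variable {α Γ : Type*} [DecidableEq α] {l u v : List α} {ℓ : α → Γ × Bool} {p q : α}
  {A S : Finset α} {π ρ : Finset (Finset α)}

/-- The subword of the word `l.map ℓ` at the positions in `S`. -/
def subword (l : List α) (ℓ : α → Γ × Bool) (S : Finset α) : List (Γ × Bool) :=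
  (l.filter (· ∈ S)).map ℓ

lemma length_subword (hl : l.Nodup) (hS : S ⊆ l.toFinset) : (subword l ℓ S).length = S.card := by
  rw [subword, List.length_map, length_filter_mem hl hS]

/-- `π` is a non-crossing partition of a set `A` of positions of the word `l.map ℓ` in the letters
of a free group, and all its subwords are alternating. For `ℓ t = (c t, w t)` and `A` the set of all
positions, these are the elements of `ANC w` on whose blocks the colouring `c` is constant. -/
structure IsANC (l : List α) (ℓ : α → Γ × Bool) (A : Finset α) (π : Finset (Finset α)) : Prop where
  isPartitionOf : IsPartitionOf A π
  nonCrossing : (π : Set (Finset α)).Pairwise (NonCrossing l)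
  isAlternating : ∀ S ∈ π, IsAlternating (subword l ℓ S)

lemma IsANC.even_card (hl : l.Nodup) (h : IsANC l ℓ l.toFinset π) (hS : S ∈ π) : Even S.card := by
  rw [← length_subword (ℓ := ℓ) hl (h.isPartitionOf.subset hS)]
  exact (h.isAlternating S hS).1

lemma IsANC.append_comm (h : IsANC (u ++ v) ℓ A π) : IsANC (v ++ u) ℓ A π where
  isPartitionOf := h.isPartitionOf
  nonCrossing := h.nonCrossing.imp fun _ _ ↦ NonCrossing.append_comm
  isAlternating S hS := by
    have := h.isAlternating S hS
    rw [subword, List.filter_append, List.map_append] at this ⊢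
    exact isAlternating_append_comm.1 this

lemma isANC_insert_iff (hS : S ∉ ρ) :
    IsANC l ℓ A (insert S ρ) ↔ S.Nonempty ∧ S ⊆ A ∧ IsAlternating (subword l ℓ S) ∧
      (∀ T ∈ ρ, NonCrossing l S T) ∧ IsANC l ℓ (A \ S) ρ := by
  have hsymm : Std.Symm (NonCrossing l) := ⟨fun _ _ ↦ NonCrossing.symm⟩
  have hpair : ((insert S ρ : Finset (Finset α)) : Set (Finset α)).Pairwise (NonCrossing l) ↔
      (ρ : Set (Finset α)).Pairwise (NonCrossing l) ∧ ∀ T ∈ ρ, NonCrossing l S T := by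
    rw [Finset.coe_insert, Set.pairwise_insert_of_symm_of_notMem (by simpa using hS)]
    rfl
  constructor
  · rintro ⟨hpart, hnc, halt⟩
    obtain ⟨hne, hSA, hρ⟩ := (isPartitionOf_insert_iff hS).1 hpart
    rw [Finset.forall_mem_insert] at halt
    exact ⟨hne, hSA, halt.1, (hpair.1 hnc).2, hρ, (hpair.1 hnc).1, halt.2⟩
  · rintro ⟨hne, hSA, halt, hnc, hρ, hρnc, hρalt⟩
    exact ⟨(isPartitionOf_insert_iff hS).2 ⟨hne, hSA, hρ⟩, hpair.2 ⟨hρnc, hnc⟩,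
      (Finset.forall_mem_insert ..).2 ⟨halt, hρalt⟩⟩

lemma subword_cons_append_singleton (hq : q ∉ S) (hp : p ∉ S) :
    subword (q :: (u ++ [p])) ℓ S = subword u ℓ S := by
  simp [subword, hq, hp]

lemma isANC_cons_append_singleton_iff (hq : q ∉ A) (hp : p ∉ A) :
    IsANC (q :: (u ++ [p])) ℓ A ρ ↔ IsANC u ℓ A ρ := by
  have hmem (hρ : IsPartitionOf A ρ) {S} (hS : S ∈ ρ) : q ∉ S ∧ p ∉ S :=
    ⟨mt (hρ.subset hS ·) hq, mt (hρ.subset hS ·) hp⟩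
  have hiff (hρ : IsPartitionOf A ρ) {S T} (hS : S ∈ ρ) (hT : T ∈ ρ) :
      NonCrossing (q :: (u ++ [p])) S T ↔ NonCrossing u S T :=
    nonCrossing_cons_append_singleton_iff (by simp [hmem hρ hS, hmem hρ hT])
      (by simp [hmem hρ hS, hmem hρ hT])
  constructor <;> rintro ⟨hρ, hnc, halt⟩ <;>
    refine ⟨hρ, fun S hS T hT hST ↦ ?_, fun S hS ↦ ?_⟩
  · exact (hiff hρ hS hT).1 (hnc hS hT hST)
  · exact subword_cons_append_singleton (hmem hρ hS).1 (hmem hρ hS).2 ▸ halt S hS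
  · exact (hiff hρ hS hT).2 (hnc hS hT hST)
  · exact (subword_cons_append_singleton (hmem hρ hS).1 (hmem hρ hS).2).symm ▸ halt S hS

lemma isANC_insert_pair_iff (hl : (q :: (u ++ [p])).Nodup) (hqp : Cancels (ℓ q) (ℓ p))
    (hρ : {q, p} ∉ ρ) :
    IsANC (q :: (u ++ [p])) ℓ (q :: (u ++ [p])).toFinset (insert {q, p} ρ) ↔
      IsANC u ℓ u.toFinset ρ := by
  have hnotMem := notMem_of_nodup_cons_append_singleton hl
  have hA : (q :: (u ++ [p])).toFinset \ {q, p} = u.toFinset := by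
    ext x
    simp only [Finset.mem_sdiff, List.mem_toFinset]
    grind
  have halt : IsAlternating (subword (q :: (u ++ [p])) ℓ {q, p}) := by
    have hu : u.filter (· ∈ ({q, p} : Finset α)) = [] := by
      simp only [List.filter_eq_nil_iff]
      grind
    have hword : subword (q :: (u ++ [p])) ℓ {q, p} = [ℓ q, ℓ p] := by
      rw [subword, List.filter_cons_of_pos (by simp), List.filter_append, hu]
      simp
    rw [hword]
    exact ⟨even_two, List.isChain_pair.2 hqp⟩
  rw [isANC_insert_iff hρ, hA, isANC_cons_append_singleton_iff (by grind) (by grind)]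
  have hsub : {q, p} ⊆ (q :: (u ++ [p])).toFinset := by simp [Finset.insert_subset_iff]
  exact ⟨fun h ↦ h.2.2.2.2, fun h ↦ ⟨⟨q, by simp⟩, hsub, halt, fun T _ ↦ nonCrossing_pair hl, h⟩⟩

end AlternatingNonCrossing

section Splitting

variable {α Γ : Type*} [DecidableEq α] {l u : List α} {ℓ : α → Γ × Bool} {p q : α}
  {A Q P : Finset α} {π ρ σ : Finset (Finset α)}

/-- `Q` and `P` are two sets of positions, one containing the first letter `q` and the other one
the last letter `p` of the word, such that the block `Q ∪ P` of the partition `insert (Q ∪ P) ρ` can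
be split into `Q` and `P`. -/
structure IsSplitting (l : List α) (q p : α) (Q P : Finset α) (ρ : Finset (Finset α)) : Prop where
  mem_left : q ∈ Q
  mem_right : p ∈ P
  disjoint : Disjoint Q P
  precedes : Precedes l Q P
  even_card : Even Q.card
  subset : Q ⊆ l.toFinset
  disjoint_left : ∀ T ∈ ρ, Disjoint Q T
  disjoint_right : ∀ T ∈ ρ, Disjoint P T

/-- Merge the blocks of `q` and `p` of the partition `π`. -/
def mergeBlocks (q p : α) (π : Finset (Finset α)) : Finset (Finset α) :=
  insert (blockOf π q ∪ blockOf π p) ((π.erase (blockOf π q)).erase (blockOf π p))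

/-- Split the block of `q` of the partition `σ` into its first `n` elements and the rest. -/
def splitBlock (l : List α) (q : α) (σ : Finset (Finset α)) (n : ℕ) : Finset (Finset α) :=
  insert (initialPart l (blockOf σ q) n)
    (insert (blockOf σ q \ initialPart l (blockOf σ q) n) (σ.erase (blockOf σ q)))

namespace IsSplitting

lemma notMem_right (h : IsSplitting l q p Q P ρ) : q ∉ P :=
  Finset.disjoint_left.1 h.disjoint h.mem_left

lemma left_notMem (h : IsSplitting l q p Q P ρ) : Q ∉ insert P ρ := by
  rw [Finset.mem_insert, not_or]
  exact ⟨fun hQP ↦ h.notMem_right (hQP ▸ h.mem_left),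
    fun hQ ↦ Finset.disjoint_left.1 (h.disjoint_left Q hQ) h.mem_left h.mem_left⟩

lemma right_notMem (h : IsSplitting l q p Q P ρ) : P ∉ ρ :=
  fun hP ↦ Finset.disjoint_left.1 (h.disjoint_right P hP) h.mem_right h.mem_right

lemma union_notMem (h : IsSplitting l q p Q P ρ) : Q ∪ P ∉ ρ := fun hU ↦
  Finset.disjoint_left.1 (h.disjoint_left _ hU) h.mem_left (Finset.mem_union_left _ h.mem_left)

lemma blockOf_left (h : IsSplitting l q p Q P ρ) : blockOf (insert Q (insert P ρ)) q = Q := by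
  refine blockOf_insert h.mem_left (Finset.forall_mem_insert .. |>.2 ⟨h.notMem_right, ?_⟩)
  exact fun T hT ↦ Finset.disjoint_left.1 (h.disjoint_left T hT) h.mem_left

lemma blockOf_right (h : IsSplitting l q p Q P ρ) : blockOf (insert Q (insert P ρ)) p = P := by
  rw [Finset.insert_comm]
  refine blockOf_insert h.mem_right (Finset.forall_mem_insert .. |>.2 ⟨?_, ?_⟩)
  · exact Finset.disjoint_right.1 h.disjoint h.mem_right
  · exact fun T hT ↦ Finset.disjoint_left.1 (h.disjoint_right T hT) h.mem_right

lemma blockOf_union (h : IsSplitting l q p Q P ρ) : blockOf (insert (Q ∪ P) ρ) q = Q ∪ P :=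
  blockOf_insert (Finset.mem_union_left _ h.mem_left)
    fun T hT ↦ Finset.disjoint_left.1 (h.disjoint_left T hT) h.mem_left

lemma mergeBlocks_eq (h : IsSplitting l q p Q P ρ) :
    mergeBlocks q p (insert Q (insert P ρ)) = insert (Q ∪ P) ρ := by
  rw [mergeBlocks, h.blockOf_left, h.blockOf_right, Finset.erase_insert h.left_notMem,
    Finset.erase_insert h.right_notMem]

lemma splitBlock_eq (hl : l.Nodup) (h : IsSplitting l q p Q P ρ) :
    splitBlock l q (insert (Q ∪ P) ρ) Q.card = insert Q (insert P ρ) := by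
  rw [splitBlock, h.blockOf_union, h.precedes.initialPart_union hl h.disjoint h.subset,
    Finset.union_sdiff_cancel_left h.disjoint, Finset.erase_insert h.union_notMem]

lemma isAlternating_subword_union_iff (hl : (q :: (u ++ [p])).Nodup) (hqp : Cancels (ℓ q) (ℓ p))
    (h : IsSplitting (q :: (u ++ [p])) q p Q P ρ) :
    IsAlternating (subword (q :: (u ++ [p])) ℓ (Q ∪ P)) ↔
      IsAlternating (subword (q :: (u ++ [p])) ℓ Q) ∧
        IsAlternating (subword (q :: (u ++ [p])) ℓ P) := by
  have hpQ : p ∉ Q := Finset.disjoint_right.1 h.disjoint h.mem_right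
  have hwordQ : subword (q :: (u ++ [p])) ℓ Q = ℓ q :: subword u ℓ Q := by
    simp [subword, h.mem_left, hpQ]
  have hwordP : subword (q :: (u ++ [p])) ℓ P = subword u ℓ P ++ [ℓ p] := by
    simp [subword, h.notMem_right, h.mem_right]
  have heven : Even (ℓ q :: subword u ℓ Q).length := by
    rw [← hwordQ, length_subword hl h.subset]
    exact h.even_card
  rw [subword, h.precedes.filter_union h.disjoint, List.map_append, ← subword, ← subword, hwordQ,
    hwordP]
  exact isAlternating_cons_append_concat_iff hqp heven

lemma isANC_insert_union_iff (hl : (q :: (u ++ [p])).Nodup) (hqp : Cancels (ℓ q) (ℓ p))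
    (h : IsSplitting (q :: (u ++ [p])) q p Q P ρ) :
    IsANC (q :: (u ++ [p])) ℓ A (insert (Q ∪ P) ρ) ↔
      IsANC (q :: (u ++ [p])) ℓ A (insert Q (insert P ρ)) := by
  have hnc : (∀ T ∈ ρ, NonCrossing (q :: (u ++ [p])) (Q ∪ P) T) ↔
      (∀ T ∈ ρ, NonCrossing (q :: (u ++ [p])) Q T) ∧
        ∀ T ∈ ρ, NonCrossing (q :: (u ++ [p])) P T := by
    rw [← forall₂_and]
    exact forall₂_congr fun T hT ↦
      nonCrossing_union_iff hl h.precedes h.mem_left h.mem_right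
        (Finset.disjoint_left.1 (h.disjoint_left T hT) h.mem_left)
        (Finset.disjoint_left.1 (h.disjoint_right T hT) h.mem_right)
  rw [isANC_insert_iff h.union_notMem, isANC_insert_iff h.left_notMem,
    isANC_insert_iff h.right_notMem, hnc, h.isAlternating_subword_union_iff hl hqp,
    Finset.forall_mem_insert, Finset.union_subset_iff, Finset.subset_sdiff, sdiff_sdiff_left,
    Finset.sup_eq_union]
  have hQP : NonCrossing (q :: (u ++ [p])) Q P := h.precedes.nonCrossing
  have hPQ : Disjoint P Q := h.disjoint.symm
  have hQ : Q.Nonempty := ⟨q, h.mem_left⟩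
  have hP : P.Nonempty := ⟨p, h.mem_right⟩
  have hU : (Q ∪ P).Nonempty := hQ.mono Finset.subset_union_left
  tauto

end IsSplitting

lemma IsANC.exists_isSplitting_of_notMem (hl : (q :: (u ++ [p])).Nodup)
    (h : IsANC (q :: (u ++ [p])) ℓ (q :: (u ++ [p])).toFinset π) (hp : p ∉ blockOf π q) :
    ∃ Q P ρ, IsSplitting (q :: (u ++ [p])) q p Q P ρ ∧ π = insert Q (insert P ρ) := by
  have hqA : q ∈ (q :: (u ++ [p])).toFinset := by simp
  have hpA : p ∈ (q :: (u ++ [p])).toFinset := by simp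
  have hQ := h.isPartitionOf.blockOf_mem hqA
  have hP := h.isPartitionOf.blockOf_mem hpA
  have hqQ := h.isPartitionOf.mem_blockOf hqA
  have hpP := h.isPartitionOf.mem_blockOf hpA
  have hne : blockOf π q ≠ blockOf π p := fun heq ↦ hp (heq ▸ hpP)
  have hdisj := h.isPartitionOf.pairwiseDisjoint hQ hP hne
  refine ⟨blockOf π q, blockOf π p, (π.erase (blockOf π q)).erase (blockOf π p),
    ⟨hqQ, hpP, hdisj, (h.nonCrossing hQ hP hne).precedes hl hdisj hqQ hpP, h.even_card hl hQ,
      h.isPartitionOf.subset hQ, fun T hT ↦ ?_, fun T hT ↦ ?_⟩, ?_⟩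
  · exact h.isPartitionOf.pairwiseDisjoint hQ
      (Finset.mem_of_mem_erase (Finset.mem_of_mem_erase hT))
      (Finset.ne_of_mem_erase (Finset.mem_of_mem_erase hT)).symm
  · exact h.isPartitionOf.pairwiseDisjoint hP
      (Finset.mem_of_mem_erase (Finset.mem_of_mem_erase hT)) (Finset.ne_of_mem_erase hT).symm
  · rw [Finset.insert_erase (Finset.mem_erase.2 ⟨hne.symm, hP⟩), Finset.insert_erase hQ]

lemma IsANC.exists_isSplitting_of_mem (hl : (q :: (u ++ [p])).Nodup)
    (h : IsANC (q :: (u ++ [p])) ℓ (q :: (u ++ [p])).toFinset σ) (hp : p ∈ blockOf σ q) {n : ℕ}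
    (hn : Even n) (hn₀ : 0 < n) (hnW : n < (blockOf σ q).card) :
    ∃ Q P ρ, IsSplitting (q :: (u ++ [p])) q p Q P ρ ∧ σ = insert (Q ∪ P) ρ ∧ Q.card = n := by
  have hqA : q ∈ (q :: (u ++ [p])).toFinset := by simp
  have hW := h.isPartitionOf.blockOf_mem hqA
  have hWA := h.isPartitionOf.subset hW
  have hdisj {T} (hT : T ∈ σ.erase (blockOf σ q)) : Disjoint (blockOf σ q) T :=
    h.isPartitionOf.pairwiseDisjoint hW (Finset.mem_of_mem_erase hT)
      (Finset.ne_of_mem_erase hT).symm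
  have hcard := card_initialPart hl hWA hnW.le
  refine ⟨initialPart (q :: (u ++ [p])) (blockOf σ q) n,
    blockOf σ q \ initialPart (q :: (u ++ [p])) (blockOf σ q) n, σ.erase (blockOf σ q), ?_, ?_,
    hcard⟩
  · exact {
      mem_left := mem_initialPart (h.isPartitionOf.mem_blockOf hqA) hn₀
      mem_right := Finset.mem_sdiff.2 ⟨hp, notMem_initialPart (u := q :: u) hl hp hWA hnW⟩
      disjoint := Finset.disjoint_sdiff
      precedes := precedes_initialPart hl
      even_card := by rwa [hcard]
      subset := initialPart_subset.trans hWA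
      disjoint_left := fun T hT ↦ (hdisj hT).mono_left initialPart_subset
      disjoint_right := fun T hT ↦ (hdisj hT).mono_left Finset.sdiff_subset }
  · rw [Finset.union_sdiff_of_subset initialPart_subset, Finset.insert_erase hW]

end Splitting

section AncSum

variable {α Γ : Type*} [DecidableEq α] {l u v : List α} {ℓ : α → Γ × Bool}
  {π : Finset (Finset α)}

open Classical in
/-- The set of alternating non-crossing partitions of the word `l.map ℓ`, see `IsANC`. -/
noncomputable def ancPartitions (l : List α) (ℓ : α → Γ × Bool) : Finset (Finset (Finset α)) :=
  {π ∈ l.toFinset.powerset.powerset | IsANC l ℓ l.toFinset π}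

lemma mem_ancPartitions : π ∈ ancPartitions l ℓ ↔ IsANC l ℓ l.toFinset π := by
  simp only [ancPartitions, Finset.mem_filter, and_iff_right_iff_imp, Finset.mem_powerset]
  exact fun h S hS ↦ Finset.mem_powerset.2 (h.isPartitionOf.subset hS)

/-- The signed Catalan sum over the alternating non-crossing partitions of the word `l.map ℓ`. It
turns out to be `1` or `0` according to whether that word is trivial in the free group. -/
noncomputable def ancSum (l : List α) (ℓ : α → Γ × Bool) : ℤ :=
  ∑ π ∈ ancPartitions l ℓ, partitionWeight π

lemma ancSum_append_comm : ancSum (u ++ v) ℓ = ancSum (v ++ u) ℓ := by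
  rw [ancSum, ancSum]
  congr 1
  ext π
  rw [mem_ancPartitions, mem_ancPartitions, List.toFinset_append, List.toFinset_append,
    Finset.union_comm]
  exact ⟨IsANC.append_comm, IsANC.append_comm⟩

end AncSum

section Cancellation

variable {α Γ : Type*} [DecidableEq α] {u : List α} {ℓ : α → Γ × Bool} {p q : α}
  {π σ : Finset (Finset α)}

lemma mem_filter_mergeBlocks_eq_iff (hl : (q :: (u ++ [p])).Nodup) (hqp : Cancels (ℓ q) (ℓ p))
    (hσ : IsANC (q :: (u ++ [p])) ℓ (q :: (u ++ [p])).toFinset σ) :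
    π ∈ (ancPartitions (q :: (u ++ [p])) ℓ).filter
        (fun π ↦ p ∉ blockOf π q ∧ mergeBlocks q p π = σ) ↔
      ∃ Q P ρ, IsSplitting (q :: (u ++ [p])) q p Q P ρ ∧ π = insert Q (insert P ρ) ∧
        σ = insert (Q ∪ P) ρ := by
  rw [Finset.mem_filter, mem_ancPartitions]
  constructor
  · rintro ⟨hπ, hp, rfl⟩
    obtain ⟨Q, P, ρ, h, rfl⟩ := hπ.exists_isSplitting_of_notMem hl hp
    exact ⟨Q, P, ρ, h, rfl, h.mergeBlocks_eq⟩
  · rintro ⟨Q, P, ρ, h, rfl, rfl⟩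
    refine ⟨(h.isANC_insert_union_iff hl hqp).1 hσ, ?_, h.mergeBlocks_eq⟩
    rw [h.blockOf_left]
    exact Finset.disjoint_right.1 h.disjoint h.mem_right

lemma IsSplitting.exists_card_eq {l : List α} {Q P : Finset α} {ρ : Finset (Finset α)} {m : ℕ}
    (h : IsSplitting l q p Q P ρ) (hm : (Q ∪ P).card = 2 * (m + 2)) :
    ∃ i j, i + j = m ∧ Q.card = 2 * (i + 1) ∧ P.card = 2 * (j + 1) := by
  obtain ⟨n, hn⟩ := h.even_card
  have hQ : 0 < Q.card := Finset.card_pos.2 ⟨q, h.mem_left⟩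
  have hP : 0 < P.card := Finset.card_pos.2 ⟨p, h.mem_right⟩
  rw [Finset.card_union_of_disjoint h.disjoint] at hm
  exact ⟨n - 1, m - (n - 1), by omega, by omega, by omega⟩

lemma IsSplitting.pair_notMem_insert_union {l : List α} {Q P : Finset α} {ρ : Finset (Finset α)}
    (h : IsSplitting l q p Q P ρ) : {q, p} ∉ insert (Q ∪ P) ρ := by
  rw [Finset.mem_insert, not_or]
  refine ⟨fun hU ↦ ?_, fun hmem ↦
    Finset.disjoint_left.1 (h.disjoint_left _ hmem) h.mem_left (Finset.mem_insert_self q {p})⟩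
  have hcard : Q.card + P.card ≤ 2 := by
    rw [← Finset.card_union_of_disjoint h.disjoint, ← hU]
    exact Finset.card_le_two
  have hQ : 0 < Q.card := Finset.card_pos.2 ⟨q, h.mem_left⟩
  have hP : 0 < P.card := Finset.card_pos.2 ⟨p, h.mem_right⟩
  obtain ⟨n, hn⟩ := h.even_card
  omega

/-- The merging of two blocks is undone by splitting off the first `2 (i + 1)` elements of the
merged block, whose size is some `2 (m + 2)`, with `i ≤ m`. -/
lemma sum_partitionWeight_mergeBlocks_eq (hl : (q :: (u ++ [p])).Nodup)
    (hqp : Cancels (ℓ q) (ℓ p)) (hσ : IsANC (q :: (u ++ [p])) ℓ (q :: (u ++ [p])).toFinset σ)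
    (hp : p ∈ blockOf σ q) {m : ℕ} (hm : (blockOf σ q).card = 2 * (m + 2)) :
    ∑ π ∈ ancPartitions (q :: (u ++ [p])) ℓ with p ∉ blockOf π q ∧ mergeBlocks q p π = σ,
      partitionWeight π = -partitionWeight σ := by
  rw [partitionWeight_eq_mul_erase (hσ.isPartitionOf.blockOf_mem (a := q) (by simp)), hm,
    ← neg_mul, ← sum_blockWeight_mul_blockWeight, Finset.sum_mul]
  have hhalf (i : ℕ) : 2 * (i + 1) / 2 - 1 = i := by omega
  refine Finset.sum_nbij'
    (fun π ↦ ((blockOf π q).card / 2 - 1, (blockOf π p).card / 2 - 1))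
    (fun ij ↦ splitBlock (q :: (u ++ [p])) q σ (2 * (ij.1 + 1)))
    (fun π hπ ↦ ?_) (fun ij hij ↦ ?_) (fun π hπ ↦ ?_) (fun ij hij ↦ ?_) (fun π hπ ↦ ?_)
  · obtain ⟨Q, P, ρ, h, rfl, rfl⟩ := (mem_filter_mergeBlocks_eq_iff hl hqp hσ).1 hπ
    obtain ⟨i, j, hij, hQ, hP⟩ := h.exists_card_eq (h.blockOf_union ▸ hm)
    simpa only [h.blockOf_left, h.blockOf_right, hQ, hP, hhalf,
      Finset.HasAntidiagonal.mem_antidiagonal] using hij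
  · have hij' := Finset.HasAntidiagonal.mem_antidiagonal.1 hij
    obtain ⟨Q, P, ρ, h, rfl, hQ⟩ := hσ.exists_isSplitting_of_mem hl hp
      (n := 2 * (ij.1 + 1)) (even_two_mul _) (by omega) (by omega)
    rw [← hQ, h.splitBlock_eq hl]
    exact (mem_filter_mergeBlocks_eq_iff hl hqp hσ).2 ⟨Q, P, ρ, h, rfl, rfl⟩
  · obtain ⟨Q, P, ρ, h, rfl, rfl⟩ := (mem_filter_mergeBlocks_eq_iff hl hqp hσ).1 hπ
    obtain ⟨i, -, -, hQ, -⟩ := h.exists_card_eq (h.blockOf_union ▸ hm)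
    simp only [h.blockOf_left, hQ, hhalf]
    rw [← hQ, h.splitBlock_eq hl]
  · have hij' := Finset.HasAntidiagonal.mem_antidiagonal.1 hij
    obtain ⟨Q, P, ρ, h, rfl, hQ⟩ := hσ.exists_isSplitting_of_mem hl hp
      (n := 2 * (ij.1 + 1)) (even_two_mul _) (by omega) (by omega)
    obtain ⟨i, j, hm', hQ', hP⟩ := h.exists_card_eq (h.blockOf_union ▸ hm)
    rw [← hQ, h.splitBlock_eq hl, h.blockOf_left, h.blockOf_right]
    exact Prod.ext (by omega) (by omega)
  · obtain ⟨Q, P, ρ, h, rfl, rfl⟩ := (mem_filter_mergeBlocks_eq_iff hl hqp hσ).1 hπ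
    obtain ⟨i, j, -, hQ, hP⟩ := h.exists_card_eq (h.blockOf_union ▸ hm)
    rw [partitionWeight_insert h.left_notMem, partitionWeight_insert h.right_notMem,
      h.blockOf_left, h.blockOf_right, h.blockOf_union, Finset.erase_insert h.union_notMem, hQ, hP]
    simp only [hhalf, mul_assoc]

lemma sum_partitionWeight_pair_mem (hl : (q :: (u ++ [p])).Nodup) (hqp : Cancels (ℓ q) (ℓ p)) :
    ∑ π ∈ ancPartitions (q :: (u ++ [p])) ℓ with {q, p} ∈ π, partitionWeight π = ancSum u ℓ := by
  have hpair {ρ} (hρ : ρ ∈ ancPartitions u ℓ) : {q, p} ∉ ρ := fun h ↦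
    (notMem_of_nodup_cons_append_singleton hl).1 <| by
      have := (mem_ancPartitions.1 hρ).isPartitionOf.subset h (Finset.mem_insert_self q {p})
      exact List.mem_append_left _ (List.mem_toFinset.1 this)
  have hcard : blockWeight ({q, p} : Finset α).card = 1 := by
    rw [Finset.card_pair (by have := hl; grind)]
    simp [blockWeight]
  refine Finset.sum_nbij' (fun π ↦ π.erase {q, p}) (fun ρ ↦ insert {q, p} ρ)
    (fun π hπ ↦ ?_) (fun ρ hρ ↦ ?_) (fun π hπ ↦ ?_) (fun ρ hρ ↦ ?_) (fun π hπ ↦ ?_)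
  · rw [Finset.mem_filter, mem_ancPartitions] at hπ
    rw [mem_ancPartitions, ← isANC_insert_pair_iff hl hqp (Finset.notMem_erase _ _),
      Finset.insert_erase hπ.2]
    exact hπ.1
  · rw [Finset.mem_filter, mem_ancPartitions, isANC_insert_pair_iff hl hqp (hpair hρ)]
    exact ⟨mem_ancPartitions.1 hρ, Finset.mem_insert_self ..⟩
  · exact Finset.insert_erase (Finset.mem_filter.1 hπ).2
  · exact Finset.erase_insert (hpair hρ)
  · rw [partitionWeight_eq_mul_erase (Finset.mem_filter.1 hπ).2, hcard, one_mul]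

lemma exists_card_blockOf_eq (hl : (q :: (u ++ [p])).Nodup)
    (hσ : IsANC (q :: (u ++ [p])) ℓ (q :: (u ++ [p])).toFinset σ) (hp : p ∈ blockOf σ q)
    (hpair : {q, p} ∉ σ) : ∃ m, (blockOf σ q).card = 2 * (m + 2) := by
  have hqA : q ∈ (q :: (u ++ [p])).toFinset := by simp
  have hW := hσ.isPartitionOf.blockOf_mem hqA
  have hsub : {q, p} ⊆ blockOf σ q :=
    Finset.insert_subset_iff.2 ⟨hσ.isPartitionOf.mem_blockOf hqA, Finset.singleton_subset_iff.2 hp⟩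
  have hlt := Finset.card_lt_card (hsub.ssubset_of_ne fun h ↦ hpair (h ▸ hW))
  rw [Finset.card_pair (by have := hl; grind)] at hlt
  obtain ⟨n, hn⟩ := hσ.even_card hl hW
  exact ⟨n - 2, by omega⟩

lemma sum_partitionWeight_notMem_blockOf (hl : (q :: (u ++ [p])).Nodup)
    (hqp : Cancels (ℓ q) (ℓ p)) :
    ∑ π ∈ ancPartitions (q :: (u ++ [p])) ℓ with p ∉ blockOf π q, partitionWeight π =
      -∑ σ ∈ ancPartitions (q :: (u ++ [p])) ℓ with p ∈ blockOf σ q ∧ {q, p} ∉ σ,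
        partitionWeight σ := by
  rw [← Finset.sum_neg_distrib, ← Finset.sum_fiberwise_of_maps_to (g := mergeBlocks q p)
    (t := {σ ∈ ancPartitions (q :: (u ++ [p])) ℓ | p ∈ blockOf σ q ∧ {q, p} ∉ σ})]
  · refine Finset.sum_congr rfl fun σ hσ ↦ ?_
    rw [Finset.mem_filter, mem_ancPartitions] at hσ
    obtain ⟨hσ, hp, hpair⟩ := hσ
    obtain ⟨m, hm⟩ := exists_card_blockOf_eq hl hσ hp hpair
    rw [Finset.filter_filter, sum_partitionWeight_mergeBlocks_eq hl hqp hσ hp hm]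
  · intro π hπ
    rw [Finset.mem_filter, mem_ancPartitions] at hπ ⊢
    obtain ⟨Q, P, ρ, h, rfl⟩ := hπ.1.exists_isSplitting_of_notMem hl hπ.2
    rw [h.mergeBlocks_eq, h.blockOf_union, h.isANC_insert_union_iff hl hqp]
    exact ⟨hπ.1, Finset.mem_union_right _ h.mem_right, h.pair_notMem_insert_union⟩

lemma ancSum_cons_append_singleton (hl : (q :: (u ++ [p])).Nodup) (hqp : Cancels (ℓ q) (ℓ p)) :
    ancSum (q :: (u ++ [p])) ℓ = ancSum u ℓ := by
  have hblock : ∀ π ∈ ancPartitions (q :: (u ++ [p])) ℓ, {q, p} ∈ π → p ∈ blockOf π q := by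
    intro π hπ hmem
    rw [(mem_ancPartitions.1 hπ).isPartitionOf.blockOf_eq hmem (Finset.mem_insert_self ..)]
    simp
  rw [← sum_partitionWeight_pair_mem hl hqp, ancSum,
    ← Finset.sum_filter_add_sum_filter_not _ (p ∈ blockOf · q),
    sum_partitionWeight_notMem_blockOf hl hqp,
    ← Finset.sum_filter_add_sum_filter_not ({π ∈ _ | p ∈ blockOf π q}) ({q, p} ∈ ·),
    Finset.filter_filter, Finset.filter_filter, add_neg_cancel_right]
  refine Finset.sum_congr (Finset.filter_congr fun π hπ ↦ ?_) fun _ _ ↦ rfl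
  exact and_iff_right_of_imp (hblock π hπ)

end Cancellation

section ReducedWords

variable {α Γ : Type*} [DecidableEq α] {l : List α} {ℓ : α → Γ × Bool} {A S : Finset α}
  {π : Finset (Finset α)} {a b : α}

lemma IsANC.exists_ne_mem (hl : l.Nodup) (h : IsANC l ℓ l.toFinset π) (ha : a ∈ l) :
    ∃ S ∈ π, a ∈ S ∧ ∃ b ∈ S, b ≠ a := by
  obtain ⟨S, hS, haS⟩ := h.isPartitionOf.exists_mem (List.mem_toFinset.2 ha)
  obtain ⟨n, hn⟩ := h.even_card hl hS
  have hpos : 0 < S.card := Finset.card_pos.2 ⟨a, haS⟩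
  exact ⟨S, hS, haS, Finset.exists_mem_ne (by omega) a⟩

lemma IsANC.not_isReduced_of_adjacent {l₁ l₂ : List α}
    (h : IsANC (l₁ ++ a :: b :: l₂) ℓ A π) (hS : S ∈ π) (ha : a ∈ S) (hb : b ∈ S) :
    ¬ FreeGroup.IsReduced ((l₁ ++ a :: b :: l₂).map ℓ) := by
  have halt := (h.isAlternating S hS).2
  simp only [subword, List.filter_append, List.filter_cons_of_pos, ha, hb, decide_true,
    List.map_append, List.map_cons, List.isChain_append_cons_cons] at halt
  intro hred
  rw [FreeGroup.IsReduced, List.map_append, List.map_cons, List.map_cons,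
    List.isChain_append_cons_cons] at hred
  exact halt.2.1.2 (hred.2.1 halt.2.1.1)

/-- A block that contains two distinct letters but not the letter following the first of them
encloses the block of that letter, which is thus a shorter witness. -/
lemma IsANC.not_isReduced_of_mem (hl : l.Nodup) (h : IsANC l ℓ l.toFinset π) (hS : S ∈ π)
    (ha : a ∈ S) (hb : b ∈ S) {l₁ m l₂ : List α} (hsplit : l = l₁ ++ a :: (m ++ b :: l₂)) :
    ¬ FreeGroup.IsReduced (l.map ℓ) := by
  induction hn : m.length using Nat.strong_induction_on generalizing l₁ m l₂ a b S with
  | _ n ih =>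
  subst hn
  cases m with
  | nil =>
    subst hsplit
    exact h.not_isReduced_of_adjacent hS ha hb
  | cons c m =>
    by_cases hcS : c ∈ S
    · subst hsplit
      exact h.not_isReduced_of_adjacent hS ha hcS
    obtain ⟨T, hT, hcT, d, hdT, hdc⟩ := h.exists_ne_mem hl (a := c) (by simp [hsplit])
    have hTS : T ≠ S := fun hTS ↦ hcS (hTS ▸ hcT)
    have hcross := h.nonCrossing hT hS hTS
    have hdS : d ∉ S := fun hdS ↦ hTS (h.isPartitionOf.eq_of_mem hT hS hdT hdS)
    have hd : d ∈ l₁ ∨ d ∈ m ∨ d ∈ l₂ := by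
      have hdl := List.mem_toFinset.1 (h.isPartitionOf.subset hT hdT)
      have hda : d ≠ a := fun hda ↦ hdS (hda ▸ ha)
      have hdb : d ≠ b := fun hdb ↦ hdS (hdb ▸ hb)
      simpa [hsplit, hda, hdb, hdc] using hdl
    rcases hd with hd | hd | hd
    · refine absurd ?_ (hcross d hdT a ha c hcT b hb).1
      rw [hsplit]
      exact (List.singleton_sublist.2 hd).append (.cons_cons a (.cons_cons c (by simp)))
    · obtain ⟨m₁, m₂, rfl⟩ := List.mem_iff_append.1 hd
      exact ih m₁.length (by grind) (l₁ := l₁ ++ [a]) (l₂ := m₂ ++ b :: l₂) hT hcT hdT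
        (by simp [hsplit]) rfl
    · refine absurd ?_ (hcross c hcT a ha d hdT b hb).2
      rw [hsplit]
      have hbd : [b, d].Sublist (b :: l₂) := .cons_cons b (List.singleton_sublist.2 hd)
      exact ((hbd.trans (List.sublist_append_right m _)).cons_cons c |>.cons_cons a).trans
        (List.sublist_append_right ..)

lemma IsANC.not_isReduced (hl : l.Nodup) (h : IsANC l ℓ l.toFinset π) (hne : l ≠ []) :
    ¬ FreeGroup.IsReduced (l.map ℓ) := by
  obtain ⟨a, u, rfl⟩ := List.exists_cons_of_ne_nil hne
  obtain ⟨S, hS, haS, b, hbS, hba⟩ := h.exists_ne_mem hl (List.mem_cons_self ..)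
  have hb : b ∈ u := by simpa [hba] using h.isPartitionOf.subset hS hbS
  obtain ⟨m, l₂, rfl⟩ := List.mem_iff_append.1 hb
  exact h.not_isReduced_of_mem hl hS haS hbS (l₁ := []) rfl

end ReducedWords

section Indicator

variable {α Γ : Type*} [DecidableEq α] {l : List α} {ℓ : α → Γ × Bool}

lemma ancSum_nil : ancSum [] ℓ = 1 := by
  have h : ancPartitions [] ℓ = {∅} := by
    ext π
    rw [mem_ancPartitions, Finset.mem_singleton]
    constructor
    · intro hπ
      refine Finset.eq_empty_of_forall_notMem fun S hS ↦ hπ.isPartitionOf.empty_notMem ?_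
      rwa [Finset.subset_empty.1 (hπ.isPartitionOf.subset hS)] at hS
    · rintro rfl
      exact ⟨⟨by simp, by simp, by simp⟩, by simp, by simp⟩
  simp [ancSum, h, partitionWeight]

lemma ancSum_eq_zero (hl : l.Nodup) (hne : l ≠ []) (hred : FreeGroup.IsReduced (l.map ℓ)) :
    ancSum l ℓ = 0 :=
  Finset.sum_eq_zero fun _ hπ ↦ ((mem_ancPartitions.1 hπ).not_isReduced hl hne hred).elim

lemma ancSum_append_cons_cons {l₁ l₂ : List α} {q p : α} (hl : (l₁ ++ q :: p :: l₂).Nodup)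
    (hqp : Cancels (ℓ q) (ℓ p)) : ancSum (l₁ ++ q :: p :: l₂) ℓ = ancSum (l₁ ++ l₂) ℓ := by
  have hl' : (p :: ((l₂ ++ l₁) ++ [q])).Nodup := by
    simpa using List.nodup_append_comm.1 (by simpa using hl : ((l₁ ++ [q]) ++ p :: l₂).Nodup)
  calc ancSum (l₁ ++ q :: p :: l₂) ℓ
      = ancSum ((l₁ ++ [q]) ++ p :: l₂) ℓ := by simp
    _ = ancSum (p :: ((l₂ ++ l₁) ++ [q])) ℓ := by rw [ancSum_append_comm]; simp
    _ = ancSum (l₂ ++ l₁) ℓ := ancSum_cons_append_singleton hl' hqp.symm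
    _ = ancSum (l₁ ++ l₂) ℓ := ancSum_append_comm

open Classical in
lemma ancSum_eq_ite (hl : l.Nodup) :
    ancSum l ℓ = if FreeGroup.mk (l.map ℓ) = 1 then 1 else 0 := by
  induction hn : l.length using Nat.strong_induction_on generalizing l with
  | _ n ih =>
  subst hn
  by_cases hred : FreeGroup.IsReduced (l.map ℓ)
  · have hmk : FreeGroup.mk (l.map ℓ) = 1 ↔ l = [] := by
      rw [← FreeGroup.toWord_eq_nil_iff, FreeGroup.toWord_mk, hred.reduce_eq, List.map_eq_nil_iff]
    obtain rfl | hne := eq_or_ne l []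
    · rw [ancSum_nil, if_pos (hmk.2 rfl)]
    · rw [ancSum_eq_zero hl hne hred, if_neg (mt hmk.1 hne)]
  · obtain ⟨u, x, y, v, huv, hxy⟩ := exists_cancels_of_not_isReduced hred
    obtain ⟨l₁, _, rfl, rfl, hxyv⟩ := List.map_eq_append_iff.1 huv
    obtain ⟨q, _, rfl, rfl, hyv⟩ := List.map_eq_cons_iff.1 hxyv
    obtain ⟨p, l₂, rfl, rfl, rfl⟩ := List.map_eq_cons_iff.1 hyv
    rw [ancSum_append_cons_cons hl hxy, huv, mk_append_cons_cons hxy, ← List.map_append,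
      ih _ (by simp) (hl.sublist (by simp)) rfl]

end Indicator

section Colourings

variable {α Γ : Type*} {π : Finset (Finset α)}

/-- The colouring `c` is constant on the blocks of `π`. -/
def ConstantOnBlocks (c : α → Γ) (π : Finset (Finset α)) : Prop :=
  ∀ S ∈ π, ∀ s ∈ S, ∀ t ∈ S, c s = c t

lemma IsPartitionOf.card_constantOnBlocks [Fintype α] [DecidableEq α]
    (h : IsPartitionOf Finset.univ π) :
    Nat.card {c : α → Γ // ConstantOnBlocks c π} = Nat.card Γ ^ π.card := by
  let block (t : α) : π := ⟨blockOf π t, h.blockOf_mem (Finset.mem_univ t)⟩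
  have hblock (S : π) {t} (ht : t ∈ S.1) : block t = S := Subtype.ext (h.blockOf_eq S.2 ht)
  have hne (S : π) : S.1.Nonempty :=
    Finset.nonempty_iff_ne_empty.2 fun hS ↦ h.empty_notMem (hS ▸ S.2)
  choose rep hrep using hne
  let e : (π → Γ) ≃ {c : α → Γ // ConstantOnBlocks c π} :=
    { toFun g := ⟨g ∘ block, fun S hS s hs t ht ↦
        congrArg g ((hblock ⟨S, hS⟩ hs).trans (hblock ⟨S, hS⟩ ht).symm)⟩
      invFun c S := c.1 (rep S)
      left_inv g := funext fun S ↦ congrArg g (hblock S (hrep S))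
      right_inv c := Subtype.ext <| funext fun t ↦
        c.2 _ (block t).2 _ (hrep _) _ (h.mem_blockOf (Finset.mem_univ t)) }
  rw [← Nat.card_congr e, Nat.card_fun, Nat.card_eq_fintype_card (α := π), Fintype.card_coe]

end Colourings

section Translation

variable {Γ : Type*} {k : ℕ} {w : Fin k → Bool} {c : Fin k → Γ} {S T : Finset (Fin k)}
  {π : Finset (Finset (Fin k))}

lemma isAltList_iff {u : List Bool} : IsAltList u ↔ Even u.length ∧ u.IsChain (· ≠ ·) := by
  rw [IsAltList, Nat.even_iff, List.isChain_iff_getElem]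
  refine and_congr_right fun _ ↦ ⟨?_, fun h ↦ ?_⟩
  · rintro (h | h) m hm
    all_goals
      simp only [List.get_eq_getElem] at h
      rw [h m (by omega), h (m + 1) hm]
      grind
  · have hparity : ∀ m (hm : m < u.length), u[m] = (u[0] == decide (m % 2 = 0)) := by
      intro m hm
      induction m with
      | zero => simp
      | succ m ih =>
        rw [Bool.eq_not.2 (h m hm).symm, ih (by omega)]
        grind
    rcases u with _ | ⟨_ | _, u⟩
    · simp
    · exact .inr fun m hm ↦ (hparity m hm).trans (by grind)
    · exact .inl fun m hm ↦ (hparity m hm).trans (by grind)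

lemma isPartitionF_iff : IsPartitionF π ↔ IsPartitionOf Finset.univ π := by
  constructor
  · rintro ⟨hempty, h⟩
    refine ⟨hempty, fun S hS T hT hST ↦ Finset.disjoint_left.2 fun t htS htT ↦
      hST ((h t).unique ⟨hS, htS⟩ ⟨hT, htT⟩), Finset.eq_univ_of_forall fun t ↦ ?_⟩
    obtain ⟨S, ⟨hS, ht⟩, -⟩ := h t
    exact Finset.mem_sup.2 ⟨S, hS, ht⟩
  · refine fun h ↦ ⟨h.empty_notMem, fun t ↦ ?_⟩
    obtain ⟨S, hS, ht⟩ := h.exists_mem (Finset.mem_univ t)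
    exact ⟨S, ⟨hS, ht⟩, fun T hT ↦ h.eq_of_mem hT.1 hS hT.2 ht⟩

lemma sublist_finRange_iff {s : List (Fin k)} :
    s.Sublist (List.finRange k) ↔ s.Pairwise (· < ·) := by
  refine ⟨fun h ↦ (List.pairwise_lt_finRange k).sublist h, fun h ↦ ?_⟩
  exact List.sublist_of_subperm_of_pairwise
    (List.subperm_of_subset (h.imp ne_of_lt) fun t _ ↦ List.mem_finRange t) h
    (List.pairwise_lt_finRange k)

lemma nonCrossingF_iff (hπ : IsPartitionOf Finset.univ π) :
    NonCrossingF π ↔ (π : Set (Finset (Fin k))).Pairwise (NonCrossing (List.finRange k)) := by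
  constructor
  · intro h S hS T hT hST a ha b hb a' ha' b' hb'
    have hsame : ¬ SameBlockF π a b := fun ⟨U, hU, haU, hbU⟩ ↦
      hST ((hπ.eq_of_mem hS hU ha haU).trans (hπ.eq_of_mem hU hT hbU hb))
    have hsame' : ¬ SameBlockF π b a := fun ⟨U, hU, hbU, haU⟩ ↦ hsame ⟨U, hU, haU, hbU⟩
    have haa : SameBlockF π a a' := ⟨S, hS, ha, ha'⟩
    have hbb : SameBlockF π b b' := ⟨T, hT, hb, hb'⟩
    rw [sublist_finRange_iff, sublist_finRange_iff]
    constructor <;> intro hlt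
    · exact hsame (h a b a' b' (by grind) (by grind) (by grind) haa hbb)
    · exact hsame' (h b a b' a' (by grind) (by grind) (by grind) hbb haa)
  · rintro h a b a' b' hab hba' hab' ⟨S, hS, ha, ha'⟩ ⟨T, hT, hb, hb'⟩
    by_contra hsame
    have hST : S ≠ T := fun hST ↦ hsame ⟨S, hS, ha, hST ▸ hb⟩
    exact (h hS hT hST a ha b hb a' ha' b' hb').1 (sublist_finRange_iff.2 (by grind))

lemma sort_eq_filter_finRange (S : Finset (Fin k)) :
    S.sort (· ≤ ·) = (List.finRange k).filter (· ∈ S) :=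
  (Finset.sortedLT_sort S).eq_of_mem_iff
    ((List.pairwise_lt_finRange k).sublist List.filter_sublist).sortedLT (by simp)

lemma isAlternating_subword_finRange_iff :
    IsAlternating (subword (List.finRange k) (fun t ↦ (c t, w t)) S) ↔
      IsAltList ((S.sort (· ≤ ·)).map w) ∧ ∀ s ∈ S, ∀ t ∈ S, c s = c t := by
  have hmem (t : Fin k) : t ∈ (List.finRange k).filter (· ∈ S) ↔ t ∈ S := by simp
  simp only [IsAlternating, subword, isChain_cancels_iff, isAltList_iff, sort_eq_filter_finRange,
    List.length_map, List.map_map, List.forall_mem_map, hmem, and_assoc, Function.comp_def]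

open Classical in
lemma ancPartitions_finRange :
    ancPartitions (List.finRange k) (fun t ↦ (c t, w t)) =
      {π ∈ ANC w | ConstantOnBlocks c π} := by
  ext π
  have huniv : (List.finRange k).toFinset = Finset.univ := by ext; simp
  simp only [mem_ancPartitions, ANC, Finset.mem_filter, Finset.mem_univ, true_and, huniv]
  constructor
  · rintro ⟨hπ, hnc, halt⟩
    simp only [isAlternating_subword_finRange_iff] at halt
    exact ⟨⟨isPartitionF_iff.2 hπ, (nonCrossingF_iff hπ).2 hnc, fun S hS ↦ (halt S hS).1⟩,
      fun S hS ↦ (halt S hS).2⟩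
  · rintro ⟨⟨hπ, hnc, halt⟩, hc⟩
    rw [isPartitionF_iff] at hπ
    exact ⟨hπ, (nonCrossingF_iff hπ).1 hnc,
      fun S hS ↦ isAlternating_subword_finRange_iff.2 ⟨halt S hS, hc S hS⟩⟩

lemma wprod_eq_mk {d : ℕ} (i : Fin k → Fin d) :
    wprod w i = FreeGroup.mk (List.ofFn fun t ↦ (i t, w t)) := by
  have hgens (b : Bool) (j : Fin d) : gens d b j = FreeGroup.mk [(j, b)] := by
    cases b <;> rfl
  rw [wprod, List.ofFn_eq_map, List.ofFn_eq_map]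
  induction List.finRange k with
  | nil => rfl
  | cons t l ih =>
    rw [List.map_cons, List.prod_cons, ih, hgens, FreeGroup.mul_mk, List.map_cons,
      List.singleton_append]

end Translation

theorem star_moment_formula_general {Γ : Type*} [Finite Γ] {k : ℕ} (w : Fin k → Bool) :
    (Nat.card {c : Fin k → Γ // FreeGroup.mk (List.ofFn fun t ↦ (c t, w t)) = 1} : ℤ) =
      ∑ π ∈ ANC w, partitionWeight π * (Nat.card Γ : ℤ) ^ π.card := by
  classical
  cases nonempty_fintype Γ
  calc (Nat.card {c : Fin k → Γ // FreeGroup.mk (List.ofFn fun t ↦ (c t, w t)) = 1} : ℤ)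
      = ∑ c : Fin k → Γ, ancSum (List.finRange k) fun t ↦ (c t, w t) := by
        simp only [ancSum_eq_ite (List.nodup_finRange k), ← List.ofFn_eq_map, Finset.sum_boole,
          Nat.card_eq_fintype_card, Fintype.card_subtype]
    _ = ∑ π ∈ ANC w, ∑ c : Fin k → Γ, if ConstantOnBlocks c π then partitionWeight π else 0 := by
        simp only [ancSum, ancPartitions_finRange, Finset.sum_filter]
        exact Finset.sum_comm
    _ = ∑ π ∈ ANC w, partitionWeight π * (Nat.card Γ : ℤ) ^ π.card := by
        refine Finset.sum_congr rfl fun π hπ ↦ ?_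
        have hpart := isPartitionF_iff.1 (Finset.mem_filter.1 hπ).2.1
        rw [← Finset.sum_filter, Finset.sum_const, ← Fintype.card_subtype,
          ← Nat.card_eq_fintype_card, hpart.card_constantOnBlocks, nsmul_eq_mul, Nat.cast_pow,
          mul_comm]

/-- Combinatorial formula for the star moments:
`M_d(w) = Σ_{π ∈ ANC(w)} (∏_{V ∈ π} (-1)^{|V|/2-1} C_{|V|/2-1}) d^{|π|}`. -/
theorem star_moment_formula (d k : ℕ) (hd : 2 ≤ d) (w : Fin k → Bool) :
    (Mword d w : ℤ) =
      ∑ π ∈ ANC w,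
        (∏ S ∈ π, (-1 : ℤ) ^ (S.card / 2 - 1) * (catalan (S.card / 2 - 1) : ℤ)) *
          (d : ℤ) ^ π.card := by
  simpa only [Mword, wprod_eq_mk, Nat.card_fin, partitionWeight, blockWeight] using
    star_moment_formula_general (Γ := Fin d) w
end

section
/- Let d ≥ 1, k ≥ 2, w = w_1⋯w_k ∈ Σ^k, and (i_1,…,i_k) ∈ {1,…,d}^k. Define the partial products v_j := g_{i_1}^{w_1}⋯g_{i_j}^{w_j} in the free group F_d. If v_k = 1 and v_j ≠ 1 for all 1 ≤ j ≤ k−1 (the path first returns to the identity exactly at time k), then i_1 = i_k and w_1 ≠ w_k. -/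
/-- The partial product `v_m := g_{i_1}^{w_1} ⋯ g_{i_m}^{w_m}` in the free group `F_d`. -/
def pProd {d k : ℕ} (w : Fin k → Bool) (i : Fin k → Fin d) (m : ℕ) : FreeGroup (Fin d) :=
  ((List.ofFn fun t => gens d (w t) (i t)).take m).prod

/-!
If a word `x u` is trivial in the free group, then `u` reduces to `x⁻¹`, so some occurrence of
`x⁻¹` in `u` survives the reduction and everything before it cancels: `u = M x⁻¹ N` with `M`
trivial. Hence the path is back at the identity right after this `x⁻¹`. If it returns for the first
time at the very end, then `N` is empty and `x⁻¹` is the last letter.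
-/

section

open FreeGroup

variable {α : Type*}

theorem mk_eq_one_iff_red_nil {L : List (α × Bool)} : mk L = 1 ↔ Red L [] := by
  rw [one_eq_mk, Red.exact]
  constructor
  · rintro ⟨_, hL, hnil⟩
    rwa [Red.nil_iff.1 hnil] at hL
  · exact fun hL => ⟨[], hL, Red.refl⟩

theorem red_to_cons_iff {L L' : List (α × Bool)} {y : α × Bool} :
    Red L (y :: L') ↔ ∃ M N, L = M ++ y :: N ∧ Red M [] ∧ Red N L' := by
  constructor
  · intro h
    induction h using Relation.ReflTransGen.head_induction_on with
    | refl => exact ⟨[], L', rfl, Red.refl, Red.refl⟩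
    | head hstep _ ih =>
      obtain ⟨M, N, heq, hM, hN⟩ := ih
      obtain @⟨s, e, a, b⟩ := hstep
      rcases List.append_eq_append_iff.1 heq with ⟨t, rfl, rfl⟩ | ⟨_ | ⟨_, t⟩, rfl, htail⟩
      · exact ⟨s ++ (a, b) :: (a, !b) :: t, N, by simp, hM.head Red.Step.not, hN⟩
      · obtain rfl : y :: N = e := htail
        exact ⟨M ++ [(a, b), (a, !b)], N, by simp, hM.append_append Red.Step.cons_not.to_red, hN⟩
      · obtain ⟨rfl, rfl⟩ := List.cons.inj htail
        exact ⟨M, t ++ (a, b) :: (a, !b) :: e, by simp, hM, hN.head Red.Step.not⟩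
  · rintro ⟨M, N, rfl, hM, hN⟩
    exact hM.append_append hN.cons_cons

theorem mk_cons_eq_one_iff {x : α} {b : Bool} {L : List (α × Bool)} :
    mk ((x, b) :: L) = 1 ↔ ∃ M N, L = M ++ (x, !b) :: N ∧ mk M = 1 ∧ mk N = 1 := by
  simp only [mk_eq_one_iff_red_nil, Red.cons_nil_iff_singleton, red_to_cons_iff]

theorem first_return_matching_general (L : List (α × Bool)) (hL : L ≠ []) (hret : mk L = 1)
    (hfirst : ∀ j, 1 ≤ j → j < L.length → mk (L.take j) ≠ 1) :
    (L.head hL).1 = (L.getLast hL).1 ∧ (L.head hL).2 ≠ (L.getLast hL).2 := by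
  obtain ⟨⟨x, b⟩, u, rfl⟩ := List.exists_cons_of_ne_nil hL
  obtain ⟨M, N, rfl, hM, -⟩ := mk_cons_eq_one_iff.1 hret
  obtain rfl : N = [] := by
    by_contra hN
    let loop := (x, b) :: M ++ [(x, !b)]
    have hloop : mk loop = 1 := mk_cons_eq_one_iff.2 ⟨M, [], rfl, hM, rfl⟩
    have hsplit : (x, b) :: (M ++ (x, !b) :: N) = loop ++ N := by simp [loop]
    have hlt : loop.length < (loop ++ N).length := by
      simpa using List.length_pos_iff.2 hN
    rw [hsplit] at hfirst
    exact hfirst loop.length (by simp [loop]) hlt (by rwa [List.take_left])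
  simp

end

theorem pProd_eq_mk_take {d k : ℕ} (w : Fin k → Bool) (i : Fin k → Fin d) (m : ℕ) :
    pProd w i m = FreeGroup.mk ((List.ofFn fun t => (i t, w t)).take m) := by
  rw [← FreeGroup.lift_of_apply (FreeGroup.mk _), FreeGroup.lift_mk, List.map_take, List.map_ofFn]
  simp [pProd, gens, Function.comp_def, Bool.cond_eq_ite]

/-- If the path first returns to the identity exactly at time `k` (i.e. `v_k = 1` and
`v_j ≠ 1` for `1 ≤ j ≤ k-1`), then `i_1 = i_k` and `w_1 ≠ w_k`. -/
theorem first_return_matching (d k : ℕ) (hd : 1 ≤ d) (hk : 2 ≤ k)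
    (w : Fin k → Bool) (i : Fin k → Fin d)
    (hret : pProd w i k = 1)
    (hfirst : ∀ j, 1 ≤ j → j ≤ k - 1 → pProd w i j ≠ 1) :
    i ⟨0, by omega⟩ = i ⟨k - 1, by omega⟩ ∧ w ⟨0, by omega⟩ ≠ w ⟨k - 1, by omega⟩ := by
  simp only [pProd_eq_mk_take] at hret hfirst
  simpa only [List.head_ofFn, List.getLast_ofFn] using
    first_return_matching_general (List.ofFn fun t => (i t, w t))
      (List.ne_nil_of_length_pos (by grind)) (by rwa [List.take_of_length_le (by simp)] at hret)
      fun j hj hjk => hfirst j hj (by grind)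
end

section
/- Fix integers d ≥ 2 and k ≥ 1. For each n ≥ d+1, let G_{d,n} be a digraph drawn uniformly at random from the set of all d-regular digraphs on {1,…,n}. Then (1/n)·E[c_k(G_{d,n})] → 0 as n → ∞, where c_k is the number of plain cycles of length k. -/
/-- The signed pair `(a,b)^w`: `(a,b)` if `w = 1` and `(b,a)` if `w = *`. -/
def sp {V : Type*} (b : Bool) (a c : V) : V × V := if b then (a, c) else (c, a)

open Classical in
/-- `2j` times the number of plain cycles of length `j`. -/
noncomputable def cycNum {V : Type*} [Fintype V] (A : Matrix V V ℕ) (j : ℕ) : ℕ :=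
  ∑ w : Fin j → Bool, ∑ v : Fin (j + 1) → V,
    if v (Fin.last j) = v 0 ∧
        Function.Injective (fun t : Fin j => sp (w t) (v t.castSucc) (v t.succ)) then
      ∏ t : Fin j,
        A (sp (w t) (v t.castSucc) (v t.succ)).1 (sp (w t) (v t.castSucc) (v t.succ)).2
    else 0

/-- The number `c_j(A)` of plain cycles of length `j`, as a real number. -/
noncomputable def cReal {V : Type*} [Fintype V] (A : Matrix V V ℕ) (j : ℕ) : ℝ :=
  (cycNum A j : ℝ) / (2 * j)

/-!
For fixed distinct arcs `e₁, …, eₘ`, a uniform `d`-regular digraph on `n` vertices contains all of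
them with probability at most `(2d / n) ^ m`, once `n` is large. This follows one arc at a time by
*switching*: a digraph containing `(a, b)` and `S` can be rewired into one containing `S` by
replacing the arcs `(a, b)`, `(x, y)` by `(a, y)`, `(x, b)`. There are `nd - O(1)` choices of
`(x, y)`, while a digraph arises from at most `d ^ 2` such rewirings. A plain cycle of length `k`
uses `k` distinct arcs and there are only `2 ^ k * n ^ k` candidates for it, so the expected number
of plain cycles is bounded as `n → ∞`.
-/

open Finset

section Toggle

variable {α β : Type*}

/-- The set of heads of the arcs of `B` with tail `i`. -/
def outNbrs [Fintype β] (B : α → β → Bool) (i : α) : Finset β :=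
  univ.filter fun j => B i j = true

/-- The set of tails of the arcs of `B` with head `j`. -/
def inNbrs [Fintype α] (B : α → β → Bool) (j : β) : Finset α :=
  univ.filter fun i => B i j = true

theorem mem_outNbrs [Fintype β] {B : α → β → Bool} {i : α} {j : β} :
    j ∈ outNbrs B i ↔ B i j = true := by
  simp [outNbrs]

theorem mem_inNbrs [Fintype α] {B : α → β → Bool} {i : α} {j : β} :
    i ∈ inNbrs B j ↔ B i j = true := by
  simp [inNbrs]

theorem card_arcs_tail_mem [Fintype α] [Fintype β] [DecidableEq α] (B : α → β → Bool)
    (s : Finset α) :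
    (univ.filter fun p : α × β => p.1 ∈ s ∧ B p.1 p.2 = true).card =
      ∑ i ∈ s, (outNbrs B i).card := by
  simp only [outNbrs, card_filter, Fintype.sum_prod_type, ite_and, sum_ite_irrel, sum_const_zero,
    sum_ite_mem, univ_inter]

theorem card_arcs_head_mem [Fintype α] [Fintype β] [DecidableEq β] (B : α → β → Bool)
    (s : Finset β) :
    (univ.filter fun p : α × β => p.2 ∈ s ∧ B p.1 p.2 = true).card =
      ∑ j ∈ s, (inNbrs B j).card := by
  simp only [inNbrs, card_filter, Fintype.sum_prod_type_right, ite_and, sum_ite_irrel,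
    sum_const_zero, sum_ite_mem, univ_inter]

/-- The rectangle `{a, x} × {b, y}` carries exactly the arcs `(a, b)` and `(x, y)` of `B`, so that
toggling it exchanges them for `(a, y)` and `(x, b)`. -/
structure AlternatingRect (B : α → β → Bool) (a x : α) (b y : β) : Prop where
  diag_left : B a b = true
  diag_right : B x y = true
  offDiag_left : B a y = false
  offDiag_right : B x b = false

theorem AlternatingRect.flip {B : α → β → Bool} {a x : α} {b y : β}
    (h : AlternatingRect B a x b y) : AlternatingRect (flip B) b y a x :=
  ⟨h.diag_left, h.diag_right, h.offDiag_right, h.offDiag_left⟩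

variable [DecidableEq α] [DecidableEq β]

/-- The switching operation: complement the entries of `B` on the rectangle `{a, x} × {b, y}`.
Complementing, rather than prescribing the new entries, makes it an involution. -/
def toggleRect (a x : α) (b y : β) (B : α → β → Bool) : α → β → Bool :=
  fun i j => if (i = a ∨ i = x) ∧ (j = b ∨ j = y) then !B i j else B i j

theorem toggleRect_involutive (a x : α) (b y : β) :
    Function.Involutive (toggleRect a x b y) := by
  intro B
  funext i j
  by_cases h : (i = a ∨ i = x) ∧ (j = b ∨ j = y) <;> simp [toggleRect, h]

theorem flip_toggleRect (a x : α) (b y : β) (B : α → β → Bool) :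
    flip (toggleRect a x b y B) = toggleRect b y a x (flip B) := by
  funext j i
  simp only [flip, toggleRect, and_comm]

namespace AlternatingRect

variable {B : α → β → Bool} {a x : α} {b y : β}

theorem toggleRect_apply_eq_apply_swap (h : AlternatingRect B a x b y) {i : α}
    (hi : i = a ∨ i = x) (j : β) :
    toggleRect a x b y B i j = B i (Equiv.swap b y j) := by
  obtain ⟨hab, hxy, hay, hxb⟩ := h
  rcases eq_or_ne j b with rfl | hjb
  · rcases hi with rfl | rfl <;> simp [toggleRect, *]
  rcases eq_or_ne j y with rfl | hjy
  · rcases hi with rfl | rfl <;> simp [toggleRect, *]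
  · simp [toggleRect, Equiv.swap_apply_of_ne_of_ne, hjb, hjy]

theorem card_outNbrs_toggleRect [Fintype β] (h : AlternatingRect B a x b y) (i : α) :
    (outNbrs (toggleRect a x b y B) i).card = (outNbrs B i).card := by
  by_cases hi : i = a ∨ i = x
  · refine card_equiv (Equiv.swap b y) fun j => ?_
    rw [mem_outNbrs, mem_outNbrs, h.toggleRect_apply_eq_apply_swap hi]
  · simp [outNbrs, toggleRect, hi]

theorem card_inNbrs_toggleRect [Fintype α] (h : AlternatingRect B a x b y) (j : β) :
    (inNbrs (toggleRect a x b y B) j).card = (inNbrs B j).card := by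
  have := h.flip.card_outNbrs_toggleRect j
  rwa [← flip_toggleRect] at this

end AlternatingRect

end Toggle

section Switching

variable {d n : ℕ} {B : Fin n → Fin n → Bool}

namespace IsRegB

theorem card_outNbrs (hB : IsRegB d n B) (i : Fin n) : (outNbrs B i).card = d :=
  hB.2.1 i

theorem card_inNbrs (hB : IsRegB d n B) (j : Fin n) : (inNbrs B j).card = d :=
  hB.2.2 j

theorem toggleRect {a x b y : Fin n} (hB : IsRegB d n B) (h : AlternatingRect B a x b y)
    (hay : a ≠ y) (hxb : x ≠ b) : IsRegB d n (toggleRect a x b y B) := by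
  refine ⟨fun i => ?_, fun i => (h.card_outNbrs_toggleRect i).trans (hB.card_outNbrs i),
    fun j => (h.card_inNbrs_toggleRect j).trans (hB.card_inNbrs j)⟩
  have hab : a ≠ b := by
    rintro rfl
    exact Bool.false_ne_true ((hB.1 a).symm.trans h.diag_left)
  have hxy : x ≠ y := by
    rintro rfl
    exact Bool.false_ne_true ((hB.1 x).symm.trans h.diag_right)
  have hi : ¬((i = a ∨ i = x) ∧ (i = b ∨ i = y)) := by grind
  simp only [_root_.toggleRect, if_neg hi, hB.1 i]

end IsRegB

/-- The arcs `(x, y)` of `B` for which replacing `(a, b)` and `(x, y)` by `(a, y)` and `(x, b)`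
creates neither loops nor multiple arcs and keeps the arcs in `S`. -/
def switchPartners (B : Fin n → Fin n → Bool) (a b : Fin n) (S : Finset (Fin n × Fin n)) :
    Finset (Fin n × Fin n) :=
  univ.filter fun p =>
    B p.1 p.2 = true ∧ p.1 ∉ insert b (inNbrs B b) ∧ p.2 ∉ insert a (outNbrs B a) ∧ p ∉ S

theorem IsRegB.mul_le_card_switchPartners_add (hB : IsRegB d n B) (a b : Fin n)
    (S : Finset (Fin n × Fin n)) :
    n * d ≤ (switchPartners B a b S).card + (S.card + 2 * ((d + 1) * d)) := by
  set arcsFrom := univ.filter fun p : Fin n × Fin n =>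
    p.1 ∈ insert b (inNbrs B b) ∧ B p.1 p.2 = true with arcsFrom_def
  set arcsInto := univ.filter fun p : Fin n × Fin n =>
    p.2 ∈ insert a (outNbrs B a) ∧ B p.1 p.2 = true with arcsInto_def
  have card_arcsFrom : arcsFrom.card ≤ (d + 1) * d := by
    simp only [arcsFrom_def, card_arcs_tail_mem, hB.card_outNbrs, sum_const, smul_eq_mul]
    gcongr
    simpa [hB.card_inNbrs] using card_insert_le b (inNbrs B b)
  have card_arcsInto : arcsInto.card ≤ (d + 1) * d := by
    simp only [arcsInto_def, card_arcs_head_mem, hB.card_inNbrs, sum_const, smul_eq_mul]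
    gcongr
    simpa [hB.card_outNbrs] using card_insert_le a (outNbrs B a)
  have cover : (univ.filter fun p : Fin n × Fin n => p.1 ∈ univ ∧ B p.1 p.2 = true) ⊆
      switchPartners B a b S ∪ (S ∪ (arcsFrom ∪ arcsInto)) := by
    intro p
    simp only [switchPartners, arcsFrom_def, arcsInto_def, mem_union, mem_filter, mem_univ,
      true_and]
    tauto
  calc n * d = (univ.filter fun p : Fin n × Fin n => p.1 ∈ univ ∧ B p.1 p.2 = true).card := by
        simp only [card_arcs_tail_mem, hB.card_outNbrs, sum_const, smul_eq_mul, card_fin]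
    _ ≤ (switchPartners B a b S).card + (S.card + (arcsFrom.card + arcsInto.card)) :=
        (card_le_card cover).trans <| (card_union_le _ _).trans <| Nat.add_le_add_left
          ((card_union_le _ _).trans <| Nat.add_le_add_left (card_union_le _ _) _) _
    _ ≤ _ := by omega

/-- The `d`-regular digraphs on `n` vertices that contain every arc in `S`. -/
noncomputable def regDigraphsContaining (d n : ℕ) (S : Finset (Fin n × Fin n)) :
    Finset (Fin n → Fin n → Bool) :=
  (regDigraphs d n).filter fun B => ∀ p ∈ S, B p.1 p.2 = true

theorem mem_regDigraphsContaining {S : Finset (Fin n × Fin n)} :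
    B ∈ regDigraphsContaining d n S ↔ IsRegB d n B ∧ ∀ p ∈ S, B p.1 p.2 = true := by
  simp [regDigraphsContaining, regDigraphs]

theorem toggleRect_mem_regDigraphsContaining {S : Finset (Fin n × Fin n)} {a b : Fin n}
    (hab : (a, b) ∉ S) (hB : B ∈ regDigraphsContaining d n (insert (a, b) S))
    {p : Fin n × Fin n} (hp : p ∈ switchPartners B a b S) :
    toggleRect a p.1 b p.2 B ∈ regDigraphsContaining d n S ∧
      p ∈ inNbrs (toggleRect a p.1 b p.2 B) b ×ˢ outNbrs (toggleRect a p.1 b p.2 B) a := by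
  obtain ⟨x, y⟩ := p
  obtain ⟨hreg, hS⟩ := mem_regDigraphsContaining.1 hB
  simp only [switchPartners, mem_filter, mem_univ, true_and, mem_insert, mem_inNbrs, mem_outNbrs,
    not_or, Bool.not_eq_true] at hp
  obtain ⟨hxy, ⟨hxb_ne, hxb⟩, ⟨hya_ne, hay⟩, hxyS⟩ := hp
  have hrect : AlternatingRect B a x b y := ⟨hS _ (mem_insert_self _ _), hxy, hay, hxb⟩
  refine ⟨mem_regDigraphsContaining.2 ⟨hreg.toggleRect hrect (Ne.symm hya_ne) hxb_ne, ?_⟩, ?_⟩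
  · rintro ⟨i, j⟩ hij
    have hBij : B i j = true := hS _ (mem_insert_of_mem hij)
    have hout : ¬((i = a ∨ i = x) ∧ (j = b ∨ j = y)) := by grind
    simp only [toggleRect, if_neg hout, hBij]
  · simp [mem_inNbrs, mem_outNbrs, toggleRect, hay, hxb]

theorem sum_card_switchPartners_le {S : Finset (Fin n × Fin n)} {a b : Fin n}
    (hab : (a, b) ∉ S) :
    ∑ B ∈ regDigraphsContaining d n (insert (a, b) S), (switchPartners B a b S).card ≤
      (regDigraphsContaining d n S).card * d ^ 2 := by
  have card_reversals : ((regDigraphsContaining d n S).sigma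
      fun B => inNbrs B b ×ˢ outNbrs B a).card = (regDigraphsContaining d n S).card * d ^ 2 := by
    rw [card_sigma]
    refine sum_const_nat fun B hB => ?_
    have hreg := (mem_regDigraphsContaining.1 hB).1
    rw [card_product, hreg.card_inNbrs, hreg.card_outNbrs, sq]
  rw [← card_sigma, ← card_reversals]
  refine card_le_card_of_injOn (fun q => ⟨toggleRect a q.2.1 b q.2.2 q.1, q.2⟩) ?_ ?_
  · rintro ⟨B, p⟩ hq
    obtain ⟨hB, hp⟩ := mem_sigma.1 hq
    exact mem_sigma.2 (toggleRect_mem_regDigraphsContaining hab hB hp)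
  · rintro ⟨B, p⟩ - ⟨B', p'⟩ - h
    simp only [Sigma.mk.injEq, heq_eq_eq] at h
    obtain ⟨h, rfl⟩ := h
    rw [(toggleRect_involutive _ _ _ _).injective h]

theorem card_regDigraphsContaining_insert_mul_le {S : Finset (Fin n × Fin n)} {a b : Fin n}
    (hab : (a, b) ∉ S) (hn : 2 * (S.card + 2 * ((d + 1) * d)) ≤ n) :
    (regDigraphsContaining d n (insert (a, b) S)).card * n ≤
      2 * d * (regDigraphsContaining d n S).card := by
  rcases (regDigraphsContaining d n (insert (a, b) S)).eq_empty_or_nonempty with h | ⟨B₀, hB₀⟩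
  · simp [h]
  have hd : 0 < d := by
    obtain ⟨hreg, hS⟩ := mem_regDigraphsContaining.1 hB₀
    rw [← hreg.card_outNbrs a]
    exact card_pos.2 ⟨b, mem_outNbrs.2 (hS _ (mem_insert_self _ _))⟩
  have half_le (B) (hB : B ∈ regDigraphsContaining d n (insert (a, b) S)) :
      n * d ≤ 2 * (switchPartners B a b S).card := by
    have := (mem_regDigraphsContaining.1 hB).1.mul_le_card_switchPartners_add a b S
    have : n ≤ n * d := Nat.le_mul_of_pos_right n hd
    omega
  refine Nat.le_of_mul_le_mul_right ?_ hd
  calc (regDigraphsContaining d n (insert (a, b) S)).card * n * d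
      = ∑ _B ∈ regDigraphsContaining d n (insert (a, b) S), n * d := by
        rw [sum_const, smul_eq_mul, mul_assoc]
    _ ≤ ∑ B ∈ regDigraphsContaining d n (insert (a, b) S), 2 * (switchPartners B a b S).card :=
        sum_le_sum half_le
    _ ≤ 2 * ((regDigraphsContaining d n S).card * d ^ 2) := by
        rw [← mul_sum]
        exact Nat.mul_le_mul_left _ (sum_card_switchPartners_le hab)
    _ = 2 * d * (regDigraphsContaining d n S).card * d := by ring

theorem card_regDigraphsContaining_mul_pow_le (S : Finset (Fin n × Fin n))
    (hn : 2 * (S.card + 2 * ((d + 1) * d)) ≤ n) :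
    (regDigraphsContaining d n S).card * n ^ S.card ≤
      (2 * d) ^ S.card * (regDigraphs d n).card := by
  induction S using Finset.induction_on with
  | empty => simp [regDigraphsContaining]
  | insert e S he ih =>
    rw [card_insert_of_notMem he] at hn ⊢
    calc (regDigraphsContaining d n (insert e S)).card * n ^ (S.card + 1)
        = (regDigraphsContaining d n (insert e S)).card * n * n ^ S.card := by ring
      _ ≤ 2 * d * (regDigraphsContaining d n S).card * n ^ S.card :=
          Nat.mul_le_mul_right _ (card_regDigraphsContaining_insert_mul_le he (by omega))
      _ = 2 * d * ((regDigraphsContaining d n S).card * n ^ S.card) := by ring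
      _ ≤ 2 * d * ((2 * d) ^ S.card * (regDigraphs d n).card) :=
          Nat.mul_le_mul_left _ (ih (by omega))
      _ = (2 * d) ^ (S.card + 1) * (regDigraphs d n).card := by ring

end Switching

section Expectation

variable {d n k : ℕ}

theorem sum_prod_adjB {ι : Type*} [Fintype ι] (f : ι → Fin n × Fin n) :
    ∑ B ∈ regDigraphs d n, ∏ t, adjB B (f t).1 (f t).2 =
      (regDigraphsContaining d n (univ.image f)).card := by
  rw [regDigraphsContaining, card_filter]
  refine sum_congr rfl fun B _ => ?_
  simp [adjB, prod_boole]

theorem pow_mul_sum_prod_adjB_le {ι : Type*} [Fintype ι] {f : ι → Fin n × Fin n}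
    (hf : Function.Injective f) (hn : 2 * (Fintype.card ι + 2 * ((d + 1) * d)) ≤ n) :
    n ^ Fintype.card ι * ∑ B ∈ regDigraphs d n, ∏ t, adjB B (f t).1 (f t).2 ≤
      (2 * d) ^ Fintype.card ι * (regDigraphs d n).card := by
  have card_image : (univ.image f).card = Fintype.card ι := card_image_of_injective _ hf
  rw [sum_prod_adjB, mul_comm, ← card_image]
  exact card_regDigraphsContaining_mul_pow_le _ (card_image ▸ hn)

theorem card_closed_sequences (V : Type*) [Fintype V] [DecidableEq V] [NeZero k] :
    (univ.filter fun v : Fin (k + 1) → V => v (Fin.last k) = v 0).card = Fintype.card V ^ k := by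
  have init_zero (v : Fin (k + 1) → V) : Fin.init v 0 = v 0 := rfl
  calc (univ.filter fun v : Fin (k + 1) → V => v (Fin.last k) = v 0).card
      = (univ : Finset (Fin k → V)).card := by
        refine card_nbij' Fin.init (fun u => Fin.snoc u (u 0)) ?_ ?_ ?_ ?_
        · simp [Set.MapsTo]
        · intro u _
          simp [← init_zero, Fin.init_snoc]
        · intro v hv
          have hclosed : v (Fin.last k) = v 0 := by simpa using hv
          simp only [init_zero, ← hclosed, Fin.snoc_init_self]
        · intro u _
          exact Fin.init_snoc _ _
    _ = Fintype.card V ^ k := by simp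

theorem sum_cycNum_le (hk : 1 ≤ k) (hn : 2 * (k + 2 * ((d + 1) * d)) ≤ n) :
    ∑ B ∈ regDigraphs d n, cycNum (adjB B) k ≤ (4 * d) ^ k * (regDigraphs d n).card := by
  classical
  have : NeZero k := ⟨by omega⟩
  set bound := (2 * d) ^ k * (regDigraphs d n).card with bound_def
  refine Nat.le_of_mul_le_mul_left ?_ (pow_pos (show 0 < n by omega) k)
  calc n ^ k * ∑ B ∈ regDigraphs d n, cycNum (adjB B) k
      = ∑ w : Fin k → Bool, ∑ v : Fin (k + 1) → Fin n, n ^ k * ∑ B ∈ regDigraphs d n,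
          if v (Fin.last k) = v 0 ∧
            Function.Injective (fun t : Fin k => sp (w t) (v t.castSucc) (v t.succ)) then
          ∏ t : Fin k, adjB B (sp (w t) (v t.castSucc) (v t.succ)).1
            (sp (w t) (v t.castSucc) (v t.succ)).2
          else 0 := by
        simp only [cycNum, ← mul_sum]
        rw [sum_comm]
        congr! 2
        rw [sum_comm]
        congr!
    _ ≤ ∑ _w : Fin k → Bool, ∑ v : Fin (k + 1) → Fin n,
          if v (Fin.last k) = v 0 then bound else 0 := by
        gcongr with w _ v
        by_cases h : v (Fin.last k) = v 0 ∧
          Function.Injective fun t : Fin k => sp (w t) (v t.castSucc) (v t.succ)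
        · simpa [h.1, h.2] using pow_mul_sum_prod_adjB_le h.2 (by simpa using hn)
        · simp only [if_neg h, sum_const_zero, mul_zero, Nat.zero_le]
    _ = 2 ^ k * (n ^ k * bound) := by
        simp [← sum_filter, card_closed_sequences]
    _ = n ^ k * ((4 * d) ^ k * (regDigraphs d n).card) := by
        rw [bound_def, show 4 * d = 2 * (2 * d) by ring, mul_pow 2 (2 * d)]
        ring

theorem cReal_nonneg {V : Type*} [Fintype V] (A : Matrix V V ℕ) (j : ℕ) : 0 ≤ cReal A j := by
  unfold cReal
  positivity

theorem inv_card_mul_sum_cReal_le (hk : 1 ≤ k) (hn : 2 * (k + 2 * ((d + 1) * d)) ≤ n) :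
    ((regDigraphs d n).card : ℝ)⁻¹ * ∑ B ∈ regDigraphs d n, cReal (adjB B) k ≤
      (4 * d : ℝ) ^ k / (2 * k) := by
  have hsum : (∑ B ∈ regDigraphs d n, (cycNum (adjB B) k : ℝ)) ≤
      (regDigraphs d n).card * (4 * d : ℝ) ^ k := by
    rw [mul_comm]
    exact_mod_cast sum_cycNum_le hk hn
  refine inv_mul_le_of_le_mul₀ (by positivity) (by positivity) ?_
  simp only [cReal]
  rw [← sum_div, ← mul_div_assoc]
  gcongr

end Expectation

open Filter in
theorem few_short_cycles_on_average_general (d k : ℕ) (hk : 1 ≤ k) :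
    Tendsto
      (fun n : ℕ => ((regDigraphs d n).card : ℝ)⁻¹ *
        ∑ B ∈ regDigraphs d n, cReal (adjB B) k / n)
      atTop (nhds 0) := by
  refine tendsto_of_tendsto_of_tendsto_of_le_of_le' tendsto_const_nhds
    (tendsto_const_div_atTop_nhds_zero_nat ((4 * d : ℝ) ^ k / (2 * k))) ?_ ?_
  · exact Eventually.of_forall fun n => mul_nonneg (by positivity) <|
      sum_nonneg fun _ _ => div_nonneg (cReal_nonneg _ _) n.cast_nonneg
  · filter_upwards [eventually_ge_atTop (2 * (k + 2 * ((d + 1) * d)))] with n hn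
    rw [← sum_div, ← mul_div_assoc]
    gcongr
    exact inv_card_mul_sum_cReal_le hk hn

open Filter in
/-- The uniform `d`-regular digraph has few short cycles on average:
`(1/n) E[c_k(G_{d,n})] → 0` as `n → ∞`. -/
theorem few_short_cycles_on_average (d k : ℕ) (hd : 2 ≤ d) (hk : 1 ≤ k) :
    Tendsto
      (fun n : ℕ => ((regDigraphs d n).card : ℝ)⁻¹ *
        ∑ B ∈ regDigraphs d n, cReal (adjB B) k / n)
      atTop (nhds 0) :=
  few_short_cycles_on_average_general d k hk
end

section
/- Let G be a d-regular digraph with adjacency matrix A on a finite vertex set V, and let k ≥ 1. Let 𝒞_k(G) be the set of vertices v ∈ V for which there exist 0 ≤ j' ≤ k, a word w' ∈ Σ^{j'}, and a vertex v' with A^{w'}(v,v') ≥ 1 such that v' lies on a plain cycle of length at most k (i.e. there exist 1 ≤ j ≤ k, a word u ∈ Σ^j, and (u_0,…,u_j) ∈ V^{j+1} with u_0 = u_j = v', the sequence of signed pairs ((u_{i−1},u_i)^{u's letters})_{1≤i≤j} injective, and ∏_{i=1}^j A^{u_i}(u_{i−1},u_i) ≥ 1). Then |𝒞_k(G)| ≤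 k²·(2d)^k·Σ_{j=1}^k c_j(G). -/
/-- `A` is the adjacency matrix of a `d`-regular digraph. -/
def IsRegAdj {V : Type*} [Fintype V] (d : ℕ) (A : Matrix V V ℕ) : Prop :=
  (∀ i j, A i j ≤ 1) ∧ (∀ i, A i i = 0) ∧
  (∀ i, ∑ j, A i j = d) ∧ (∀ j, ∑ i, A i j = d)

/-- The vertex `v'` lies on a plain cycle of length at most `k`. -/
def OnCycle {V : Type*} [Fintype V] (A : Matrix V V ℕ) (k : ℕ) (v' : V) : Prop :=
  ∃ j, 1 ≤ j ∧ j ≤ k ∧ ∃ u : Fin j → Bool, ∃ c : Fin (j + 1) → V,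
    c 0 = v' ∧ c (Fin.last j) = v' ∧
    Function.Injective (fun t : Fin j => sp (u t) (c t.castSucc) (c t.succ)) ∧
    1 ≤ ∏ t : Fin j,
        A (sp (u t) (c t.castSucc) (c t.succ)).1 (sp (u t) (c t.castSucc) (c t.succ)).2

/-- `𝒞_k(G)`: the set of vertices `v` from which some vertex `v'` with
`A^{w'}(v,v') ≥ 1` for a word `w'` of length at most `k` lies on a plain cycle of
length at most `k`. -/
def CkSet {V : Type*} [Fintype V] [DecidableEq V] (A : Matrix V V ℕ) (k : ℕ) : Set V :=
  {v | ∃ j', j' ≤ k ∧ ∃ w' : Fin j' → Bool, ∃ v' : V, 1 ≤ wMat A w' v v' ∧ OnCycle A k v'}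

/-!
A plain cycle through `v'` and its reversal are distinct, because their signed steps are the same
pairs in opposite order with opposite signs. Hence the number of vertices on a plain cycle of
length `j` is at most `cycNum A j / 2 = j * c_j`. For a fixed `v'`, each of the `2 ^ n` words of
length `n` leads to `v'` from at most `d ^ n` vertices. A vertex on a plain cycle of length `j` is
also reached from itself along the word of that cycle, so only words of lengths `1, …, k` matter,
and their total contribution is at most `k * (2 * d) ^ k` for each `v'`.
-/

theorem sp_not {V : Type*} (b : Bool) (x y : V) : sp (!b) x y = sp b y x := by
  cases b <;> rfl

theorem apply_sp {V R : Type*} (A : Matrix V V R) (b : Bool) (x y : V) :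
    A (sp b x y).1 (sp b x y).2 = (if b then A else A.transpose) x y := by
  cases b <;> rfl

/-- A candidate signed walk of length `n`, its word and its vertices; the matrix entries along it
are not required to be positive. -/
abbrev SignedWalk (V : Type*) (n : ℕ) : Type _ := (Fin n → Bool) × (Fin (n + 1) → V)

namespace SignedWalk

variable {V : Type*} {n : ℕ}

/-- The `t`-th signed pair `(v_t, v_{t+1})^{w_{t+1}}` traversed by a walk. -/
def step (p : SignedWalk V n) (t : Fin n) : V × V :=
  sp (p.1 t) (p.2 t.castSucc) (p.2 t.succ)

/-- The product of the matrix entries along a walk. -/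
def weight (A : Matrix V V ℕ) (p : SignedWalk V n) : ℕ :=
  ∏ t, A (p.step t).1 (p.step t).2

/-- A plain cycle of the multigraph with adjacency matrix `A`, as a closed walk with a base point
and a direction. -/
structure IsPlainCycle (A : Matrix V V ℕ) (p : SignedWalk V n) : Prop where
  closed : p.2 (Fin.last n) = p.2 0
  injective_step : Function.Injective p.step
  weight_pos : 1 ≤ p.weight A

/-- The walk traversed backwards. -/
def reverse (p : SignedWalk V n) : SignedWalk V n :=
  (fun t => !p.1 t.rev, fun t => p.2 t.rev)

theorem step_reverse (p : SignedWalk V n) (t : Fin n) : p.reverse.step t = p.step t.rev := by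
  change sp (!p.1 t.rev) (p.2 t.castSucc.rev) (p.2 t.succ.rev) = _
  rw [sp_not, Fin.rev_castSucc, Fin.rev_succ]
  rfl

theorem weight_reverse (A : Matrix V V ℕ) (p : SignedWalk V n) :
    p.reverse.weight A = p.weight A := by
  simp only [weight, step_reverse]
  exact Equiv.prod_comp Fin.revPerm fun t => A (p.step t).1 (p.step t).2

theorem IsPlainCycle.reverse {A : Matrix V V ℕ} {p : SignedWalk V n} (hp : p.IsPlainCycle A) :
    p.reverse.IsPlainCycle A where
  closed := by simp [SignedWalk.reverse, hp.closed]
  injective_step := by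
    rw [funext p.step_reverse]
    exact hp.injective_step.comp Fin.rev_injective
  weight_pos := (weight_reverse A p).symm ▸ hp.weight_pos

theorem reverse_ne_self [NeZero n] {p : SignedWalk V n} (hp : Function.Injective p.step) :
    p.reverse ≠ p := by
  intro h
  have rev_zero : (0 : Fin n).rev = 0 := hp <| by rw [← step_reverse, h]
  have sign_flip : (!p.1 (0 : Fin n).rev) = p.1 0 := congrFun (congrArg Prod.fst h) 0
  rw [rev_zero] at sign_flip
  exact Bool.not_ne_self _ sign_flip

end SignedWalk

section PlainCycles

open Finset

variable {V : Type*} [Fintype V]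

open Classical in
/-- The plain cycles of length `j`, each one counted once for every choice of a base point and a
direction. -/
noncomputable def plainCycles (A : Matrix V V ℕ) (j : ℕ) : Finset (SignedWalk V j) :=
  {p | p.IsPlainCycle A}

open Classical in
/-- The vertices lying on a plain cycle of length exactly `j`. -/
noncomputable def cycleVertices (A : Matrix V V ℕ) (j : ℕ) : Finset V :=
  (plainCycles A j).image fun p => p.2 0

theorem mem_plainCycles {A : Matrix V V ℕ} {j : ℕ} {p : SignedWalk V j} :
    p ∈ plainCycles A j ↔ p.IsPlainCycle A := by
  simp only [plainCycles, mem_filter_univ]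

theorem mem_cycleVertices {A : Matrix V V ℕ} {j : ℕ} {v : V} :
    v ∈ cycleVertices A j ↔ ∃ p : SignedWalk V j, p.IsPlainCycle A ∧ p.2 0 = v := by
  simp only [cycleVertices, mem_image, mem_plainCycles]

theorem OnCycle.exists_mem_cycleVertices {A : Matrix V V ℕ} {k : ℕ} {v : V} (h : OnCycle A k v) :
    ∃ j ∈ Icc 1 k, v ∈ cycleVertices A j := by
  obtain ⟨j, one_le, le_k, u, c, h_first, h_last, h_inj, h_pos⟩ := h
  exact ⟨j, mem_Icc.2 ⟨one_le, le_k⟩,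
    mem_cycleVertices.2 ⟨(u, c), ⟨h_last.trans h_first.symm, h_inj, h_pos⟩, h_first⟩⟩

theorem cycNum_eq_sum_weight (A : Matrix V V ℕ) (j : ℕ) :
    cycNum A j = ∑ p ∈ plainCycles A j, p.weight A := by
  classical
  rw [cycNum, ← Fintype.sum_prod_type', ← sum_filter]
  refine (sum_subset (fun p hp => ?_) fun p hp hp' => ?_).symm
  · rw [mem_plainCycles] at hp
    exact (mem_filter_univ _).2 ⟨hp.closed, hp.injective_step⟩
  · obtain ⟨h_closed, h_inj⟩ := (mem_filter_univ _).1 hp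
    by_contra h_weight
    exact hp' (mem_plainCycles.2 ⟨h_closed, h_inj, Nat.one_le_iff_ne_zero.2 h_weight⟩)

theorem card_plainCycles_le_cycNum (A : Matrix V V ℕ) (j : ℕ) :
    #(plainCycles A j) ≤ cycNum A j := by
  rw [cycNum_eq_sum_weight, card_eq_sum_ones]
  exact sum_le_sum fun p hp => (mem_plainCycles.1 hp).weight_pos

theorem two_mul_card_cycleVertices_le_cycNum (A : Matrix V V ℕ) (j : ℕ) [NeZero j] :
    2 * #(cycleVertices A j) ≤ cycNum A j := by
  classical
  refine le_trans ?_ (card_plainCycles_le_cycNum A j)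
  refine mul_card_image_le_card_of_maps_to (f := fun p => p.2 0)
    (fun p hp => mem_cycleVertices.2 ⟨p, mem_plainCycles.1 hp, rfl⟩) 2 fun v hv => ?_
  obtain ⟨p, hp, rfl⟩ := mem_cycleVertices.1 hv
  refine one_lt_card.2 ⟨p, ?_, p.reverse, ?_, (SignedWalk.reverse_ne_self hp.injective_step).symm⟩
  · simp only [mem_filter, mem_plainCycles, hp, true_and]
  · exact mem_filter.2 ⟨mem_plainCycles.2 hp.reverse,
      (congrArg p.2 (Fin.rev_zero j)).trans hp.closed⟩

end PlainCycles

theorem apply_mul_apply_le_mul_apply {l m n R : Type*} [Fintype m] [NonUnitalNonAssocSemiring R]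
    [PartialOrder R] [CanonicallyOrderedAdd R] (M : Matrix l m R)
    (N : Matrix m n R) (i : l) (x : m) (j : n) : M i x * N x j ≤ (M * N) i j :=
  Finset.single_le_sum_of_canonicallyOrdered (f := fun x => M i x * N x j) (Finset.mem_univ x)

theorem sum_listProd_apply_le {V R : Type*} [Fintype V] [DecidableEq V] [Semiring R]
    [PartialOrder R] [CanonicallyOrderedAdd R] {d : R}
    {L : List (Matrix V V R)} (hL : ∀ M ∈ L, ∀ j, ∑ i, M i j ≤ d) (j : V) :
    ∑ i, L.prod i j ≤ d ^ L.length := by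
  induction L with
  | nil => simp [Matrix.one_apply]
  | cons M L ih =>
    obtain ⟨hM, hL⟩ := List.forall_mem_cons.1 hL
    calc ∑ i, (M :: L).prod i j
        = ∑ x, (∑ i, M i x) * L.prod x j := by
          simp only [List.prod_cons, Matrix.mul_apply, Finset.sum_mul]
          exact Finset.sum_comm
      _ ≤ ∑ x, d * L.prod x j := Finset.sum_le_sum fun x _ => mul_le_mul_left (hM x) _
      _ = d * ∑ x, L.prod x j := (Finset.mul_sum ..).symm
      _ ≤ d * d ^ L.length := mul_le_mul_right (ih hL) d
      _ = d ^ (M :: L).length := (pow_succ' ..).symm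

section Words

open Finset

variable {V : Type*} [Fintype V] [DecidableEq V]

theorem wMat_zero (A : Matrix V V ℕ) (w : Fin 0 → Bool) : wMat A w = 1 := by
  simp [wMat]

theorem wMat_succ (A : Matrix V V ℕ) {n : ℕ} (w : Fin (n + 1) → Bool) :
    wMat A w = (if w 0 then A else A.transpose) * wMat A (Fin.tail w) := by
  rw [wMat, List.ofFn_succ, List.prod_cons]
  rfl

theorem SignedWalk.weight_le_wMat (A : Matrix V V ℕ) {n : ℕ} (p : SignedWalk V n) :
    p.weight A ≤ wMat A p.1 (p.2 0) (p.2 (Fin.last n)) := by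
  induction n with
  | zero => simp [weight, wMat_zero]
  | succ n ih =>
    obtain ⟨w, v⟩ := p
    calc weight A (w, v)
        = (if w 0 then A else A.transpose) (v 0) (v 1) * weight A (Fin.tail w, Fin.tail v) := by
          rw [← apply_sp]
          exact Fin.prod_univ_succ _
      _ ≤ (if w 0 then A else A.transpose) (v 0) (v 1) *
            wMat A (Fin.tail w) (v 1) (v (Fin.last (n + 1))) :=
          Nat.mul_le_mul_left _ (ih (Fin.tail w, Fin.tail v))
      _ ≤ wMat A w (v 0) (v (Fin.last (n + 1))) := by
          rw [wMat_succ]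
          exact apply_mul_apply_le_mul_apply ..

/-- The vertices from which `v` is reached along some word of length exactly `n`. -/
def wordSources (A : Matrix V V ℕ) (n : ℕ) (v : V) : Finset V :=
  {x | ∃ w : Fin n → Bool, 1 ≤ wMat A w x v}

theorem mem_wordSources {A : Matrix V V ℕ} {n : ℕ} {v x : V} :
    x ∈ wordSources A n v ↔ ∃ w : Fin n → Bool, 1 ≤ wMat A w x v := by
  simp only [wordSources, mem_filter_univ]

theorem self_mem_wordSources {A : Matrix V V ℕ} {j : ℕ} {v : V} (hv : v ∈ cycleVertices A j) :
    v ∈ wordSources A j v := by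
  obtain ⟨p, hp, rfl⟩ := mem_cycleVertices.1 hv
  have h := hp.weight_pos.trans (p.weight_le_wMat A)
  rw [hp.closed] at h
  exact mem_wordSources.2 ⟨p.1, h⟩

theorem exists_of_mem_CkSet {A : Matrix V V ℕ} {k : ℕ} {x : V} (hx : x ∈ CkSet A k) :
    ∃ j ∈ Icc 1 k, ∃ v ∈ cycleVertices A j, ∃ n ∈ Icc 1 k, x ∈ wordSources A n v := by
  obtain ⟨n, hn, w, v, hw, hv⟩ := hx
  obtain ⟨j, hj, hvj⟩ := hv.exists_mem_cycleVertices
  refine ⟨j, hj, v, hvj, ?_⟩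
  rcases n.eq_zero_or_pos with rfl | hn_pos
  · obtain rfl : x = v := by
      by_contra hxv
      simp [wMat_zero, Matrix.one_apply_ne hxv] at hw
    exact ⟨j, hj, self_mem_wordSources hvj⟩
  · exact ⟨n, mem_Icc.2 ⟨hn_pos, hn⟩, mem_wordSources.2 ⟨w, hw⟩⟩

variable {A : Matrix V V ℕ} {d : ℕ}

theorem sum_wMat_apply_le (hrow : ∀ i, ∑ j, A i j ≤ d) (hcol : ∀ j, ∑ i, A i j ≤ d) {n : ℕ}
    (w : Fin n → Bool) (v : V) : ∑ x, wMat A w x v ≤ d ^ n := by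
  have hL : ∀ M ∈ List.ofFn fun t => if w t then A else A.transpose, ∀ j, ∑ i, M i j ≤ d := by
    rw [List.forall_mem_ofFn_iff]
    intro t
    split_ifs
    · exact hcol
    · exact hrow
  exact (sum_listProd_apply_le hL v).trans_eq (by rw [List.length_ofFn])

theorem card_wordSources_le (hrow : ∀ i, ∑ j, A i j ≤ d) (hcol : ∀ j, ∑ i, A i j ≤ d)
    (n : ℕ) (v : V) : #(wordSources A n v) ≤ (2 * d) ^ n := by
  have card_le_of_word (w : Fin n → Bool) : #{x | 1 ≤ wMat A w x v} ≤ d ^ n := by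
    refine le_trans ?_ (sum_wMat_apply_le hrow hcol w v)
    rw [card_eq_sum_ones]
    exact (sum_le_sum fun x hx => (mem_filter.1 hx).2).trans
      (sum_le_sum_of_subset (filter_subset ..))
  calc #(wordSources A n v)
      ≤ #(univ.biUnion fun w : Fin n → Bool => {x | 1 ≤ wMat A w x v}) :=
        card_le_card fun x hx => by simpa [mem_wordSources] using hx
    _ ≤ #(univ : Finset (Fin n → Bool)) * d ^ n :=
        card_biUnion_le_card_mul _ _ _ fun w _ => card_le_of_word w
    _ = (2 * d) ^ n := by simp [mul_pow]

theorem card_CkSet_le_sum_mul_sum (hrow : ∀ i, ∑ j, A i j ≤ d) (hcol : ∀ j, ∑ i, A i j ≤ d)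
    (k : ℕ) :
    Nat.card (CkSet A k) ≤
      (∑ j ∈ Icc 1 k, #(cycleVertices A j)) * ∑ n ∈ Icc 1 k, (2 * d) ^ n := by
  have h_subset : CkSet A k ⊆ ((Icc 1 k).biUnion fun j => (cycleVertices A j).biUnion fun v =>
      (Icc 1 k).biUnion fun n => wordSources A n v : Finset V) := fun x hx => by
    simpa only [coe_biUnion, Set.mem_iUnion, exists_prop, mem_coe] using exists_of_mem_CkSet hx
  rw [Nat.card_coe_set_eq, sum_mul]
  refine (Set.ncard_le_ncard h_subset).trans ?_
  rw [Set.ncard_coe_finset]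
  refine card_biUnion_le.trans (sum_le_sum fun j _ => ?_)
  refine card_biUnion_le_card_mul _ _ _ fun v _ => ?_
  exact card_biUnion_le.trans (sum_le_sum fun n _ => card_wordSources_le hrow hcol n v)

theorem sum_Icc_pow_le (b k : ℕ) : ∑ n ∈ Icc 1 k, b ^ n ≤ k * b ^ k := by
  have pow_le (n : ℕ) (hn : n ∈ Icc 1 k) : b ^ n ≤ b ^ k := by
    obtain ⟨one_le, le_k⟩ := mem_Icc.1 hn
    rcases b.eq_zero_or_pos with rfl | hb
    · simp [zero_pow (Nat.one_le_iff_ne_zero.1 one_le)]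
    · exact Nat.pow_le_pow_right hb le_k
  simpa using sum_le_card_nsmul _ _ _ pow_le

theorem card_CkSet_le_mul_sum_card_cycleVertices (hrow : ∀ i, ∑ j, A i j ≤ d)
    (hcol : ∀ j, ∑ i, A i j ≤ d) (k : ℕ) :
    Nat.card (CkSet A k) ≤ k * (2 * d) ^ k * ∑ j ∈ Icc 1 k, #(cycleVertices A j) :=
  calc Nat.card (CkSet A k)
      ≤ (∑ j ∈ Icc 1 k, #(cycleVertices A j)) * ∑ n ∈ Icc 1 k, (2 * d) ^ n :=
        card_CkSet_le_sum_mul_sum hrow hcol k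
    _ ≤ (∑ j ∈ Icc 1 k, #(cycleVertices A j)) * (k * (2 * d) ^ k) :=
        Nat.mul_le_mul_left _ (sum_Icc_pow_le _ k)
    _ = _ := mul_comm ..

end Words

theorem card_cycleVertices_le_mul_cycNum_div {V : Type*} [Fintype V] (A : Matrix V V ℕ) (j : ℕ)
    [NeZero j] : ((cycleVertices A j).card : ℝ) ≤ j * ((cycNum A j : ℝ) / (2 * j)) := by
  have two_mul_card_le : (2 * (cycleVertices A j).card : ℝ) ≤ cycNum A j :=
    mod_cast two_mul_card_cycleVertices_le_cycNum A j
  have hj : (j : ℝ) ≠ 0 := NeZero.ne _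
  calc ((cycleVertices A j).card : ℝ) ≤ (cycNum A j : ℝ) / 2 := by linarith
    _ = j * ((cycNum A j : ℝ) / (2 * j)) := by field_simp

theorem card_CkSet_le_general {V : Type*} [Fintype V] [DecidableEq V] (A : Matrix V V ℕ) {d k : ℕ}
    (hrow : ∀ i, ∑ j, A i j ≤ d) (hcol : ∀ j, ∑ i, A i j ≤ d) :
    (Nat.card (CkSet A k) : ℝ) ≤
      (k : ℝ) ^ 2 * (2 * d : ℝ) ^ k * ∑ j ∈ Finset.Icc 1 k, (cycNum A j : ℝ) / (2 * j) := by
  have sum_card_le : ∑ j ∈ Finset.Icc 1 k, ((cycleVertices A j).card : ℝ) ≤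
      k * ∑ j ∈ Finset.Icc 1 k, (cycNum A j : ℝ) / (2 * j) := by
    rw [Finset.mul_sum]
    refine Finset.sum_le_sum fun j hj => ?_
    obtain ⟨one_le, le_k⟩ := Finset.mem_Icc.1 hj
    have : NeZero j := ⟨Nat.one_le_iff_ne_zero.1 one_le⟩
    exact (card_cycleVertices_le_mul_cycNum_div A j).trans (by gcongr)
  calc (Nat.card (CkSet A k) : ℝ)
      ≤ k * (2 * d) ^ k * ∑ j ∈ Finset.Icc 1 k, ((cycleVertices A j).card : ℝ) :=
        mod_cast card_CkSet_le_mul_sum_card_cycleVertices hrow hcol k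
    _ ≤ k * (2 * d) ^ k * (k * ∑ j ∈ Finset.Icc 1 k, (cycNum A j : ℝ) / (2 * j)) := by gcongr
    _ = _ := by ring

/-- The number of vertices within distance `k` of a short plain cycle is at most
`k² (2d)^k Σ_{j=1}^k c_j(G)`. -/
theorem card_CkSet_le (d k : ℕ) {V : Type} [Fintype V] [DecidableEq V]
    (A : Matrix V V ℕ) (hreg : IsRegAdj d A) (hk : 1 ≤ k) :
    (Nat.card ↥(CkSet A k) : ℝ) ≤
      (k : ℝ) ^ 2 * (2 * d : ℝ) ^ k * ∑ j ∈ Finset.Icc 1 k, (cycNum A j : ℝ) / (2 * j) :=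
  card_CkSet_le_general A (fun i => (hreg.2.2.1 i).le) fun j => (hreg.2.2.2 j).le
end
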